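/- (Feingold–Frenkel level-1 root multiplicities.) Let 𝔉 = g(A_F) with A_F = [[2,−2,0],[−2,2,−1],[0,−1,2]]. For all a, b ∈ ℕ, let α = aα₁ + bα₂ + α₃ and suppose (α|α) ≤ 0. Then mult(α) = p(1 − (α|α)/2), where p is the classical partition function. (Note (α|α) is an even integer, so 1 − (α|α)/2 is a positive integer.) -/

import Mathlib

/-! Serre presentation of the Kac–Moody Lie algebra `g(A)` of a generalized Cartan
matrix `A`. -/

/-- Generators `e i`, `f i`, `h i` of the Serre presentation. -/
inductive ChevalleyGen (ℓ : ℕ) : Type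
  | e : Fin ℓ → ChevalleyGen ℓ
  | f : Fin ℓ → ChevalleyGen ℓ
  | h : Fin ℓ → ChevalleyGen ℓ

namespace KacMoody

variable {ℓ : ℕ}

/-- The free Lie algebra over `ℂ` on the generators. -/
abbrev FreeLie (ℓ : ℕ) : Type := FreeLieAlgebra ℂ (ChevalleyGen ℓ)

noncomputable def E (i : Fin ℓ) : FreeLie ℓ := FreeLieAlgebra.of ℂ (ChevalleyGen.e i)
noncomputable def F (i : Fin ℓ) : FreeLie ℓ := FreeLieAlgebra.of ℂ (ChevalleyGen.f i)
noncomputable def H (i : Fin ℓ) : FreeLie ℓ := FreeLieAlgebra.of ℂ (ChevalleyGen.h i)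

open LieAlgebra in
/-- The defining relations of the Serre presentation: `⁅h i, h j⁆ = 0`,
`⁅e i, f j⁆ = δ_{ij} h i`, `⁅h i, e j⁆ = A i j • e j`, `⁅h i, f j⁆ = −A i j • f j`, and the
Serre relations `(ad (e i))^(1 − A i j) (e j) = 0`, `(ad (f i))^(1 − A i j) (f j) = 0` for
`i ≠ j`. -/
noncomputable def serreRelations (A : Matrix (Fin ℓ) (Fin ℓ) ℤ) : Set (FreeLie ℓ) :=
  {x : FreeLie ℓ | ∃ i j : Fin ℓ, x = ⁅H i, H j⁆} ∪
  {x : FreeLie ℓ | ∃ i j : Fin ℓ, x = ⁅E i, F j⁆ - if i = j then H i else 0} ∪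
  {x : FreeLie ℓ | ∃ i j : Fin ℓ, x = ⁅H i, E j⁆ - (A i j : ℂ) • E j} ∪
  {x : FreeLie ℓ | ∃ i j : Fin ℓ, x = ⁅H i, F j⁆ + (A i j : ℂ) • F j} ∪
  {x : FreeLie ℓ | ∃ i j : Fin ℓ, i ≠ j ∧ x = ((ad ℂ (FreeLie ℓ) (E i)) ^ (1 - A i j).toNat) (E j)} ∪
  {x : FreeLie ℓ | ∃ i j : Fin ℓ, i ≠ j ∧ x = ((ad ℂ (FreeLie ℓ) (F i)) ^ (1 - A i j).toNat) (F j)}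

/-- The Lie ideal of the free Lie algebra generated by the Serre relations. -/
noncomputable def serreIdeal (A : Matrix (Fin ℓ) (Fin ℓ) ℤ) : LieIdeal ℂ (FreeLie ℓ) :=
  LieSubmodule.lieSpan ℂ (FreeLie ℓ) (serreRelations A)

/-- The Serre-presented Lie algebra `g(A)` of a generalized Cartan matrix `A`: the quotient
of the free Lie algebra on the generators `e i`, `f i`, `h i` by the ideal generated by
the defining relations. -/
abbrev gA (A : Matrix (Fin ℓ) (Fin ℓ) ℤ) : Type := FreeLie ℓ ⧸ serreIdeal A

/-- The image of `h i` in `g(A)`. -/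
noncomputable def Hbar (A : Matrix (Fin ℓ) (Fin ℓ) ℤ) (i : Fin ℓ) : gA A :=
  LieSubmodule.Quotient.mk' (serreIdeal A) (H i)

open LieAlgebra in
/-- The root space `g_α` for `α = ∑ c i • α i`: all `x` with
`⁅h i, x⁆ = (∑ j, A i j * c j) • x` for every `i`. -/
noncomputable def rootSpace (A : Matrix (Fin ℓ) (Fin ℓ) ℤ) (c : Fin ℓ → ℤ) :
    Submodule ℂ (gA A) :=
  ⨅ i : Fin ℓ, Module.End.eigenspace (ad ℂ (gA A) (Hbar A i)) ((∑ j, A i j * c j : ℤ) : ℂ)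

/-- The multiplicity of the root `α = ∑ c i • α i`: the dimension of `g_α`. -/
noncomputable def mult (A : Matrix (Fin ℓ) (Fin ℓ) ℤ) (c : Fin ℓ → ℤ) : ℕ :=
  Module.finrank ℂ (rootSpace A c)

end KacMoody

/-- `p n` is the classical partition function: the number of partitions of `n`. -/
def p (n : ℕ) : ℕ := Fintype.card (Nat.Partition n)

/-- The generalized Cartan matrix of the rank 3 hyperbolic Kac–Moody algebra `𝔉` of type
`HA₁⁽¹⁾`. -/
def AF : Matrix (Fin 3) (Fin 3) ℤ := !![2, -2, 0; -2, 2, -1; 0, -1, 2]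

/-- The invariant symmetric bilinear form `(α|α) = ∑_{i,j} c i · A i j · c j` for
`α = ∑ c i • α i`. -/
def normAF (c : Fin 3 → ℤ) : ℤ := ∑ i, ∑ j, c i * AF i j * c j


namespace FF

/-- loop elements -/
noncomputable def le {L : Type*} [LieRing L] [LieAlgebra ℂ L] (x y : L) : ℕ → L
  | 0 => x
  | n + 1 => (1 / 2 : ℂ) • ⁅⁅x, y⁆, le x y n⁆

noncomputable def lf {L : Type*} [LieRing L] [LieAlgebra ℂ L] (x y : L) : ℕ → L
  | 0 => y
  | n + 1 => (-1 / 2 : ℂ) • ⁅⁅x, y⁆, lf x y n⁆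

noncomputable def lh {L : Type*} [LieRing L] [LieAlgebra ℂ L] (x y : L) (n : ℕ) : L :=
  ⁅x, lf x y n⁆

section
set_option linter.unusedSectionVars false
variable {L : Type*} [LieRing L] [LieAlgebra ℂ L] (x y : L)

theorem lh_zero : lh x y 0 = ⁅x, y⁆ := rfl

theorem h0e (n : ℕ) : ⁅lh x y 0, le x y n⁆ = (2 : ℂ) • le x y (n + 1) := by
  rw [lh_zero, le, smul_smul]; norm_num

theorem h0f (n : ℕ) : ⁅lh x y 0, lf x y n⁆ = (-2 : ℂ) • lf x y (n + 1) := by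
  rw [lh_zero, lf, smul_smul]; norm_num

theorem smul_cancel_two {a b : L} (c : ℂ) (hc : c ≠ 0) (h : c • a = c • b) : a = b :=
  smul_right_injective L hc h

/-- abstract: a sequence g with two shift derivations commutes -/
theorem comm_of_shift (g : ℕ → L) (h0 h1 : L) (s : ℂ) (hs : s ≠ 0)
    (H0 : ∀ n, ⁅h0, g n⁆ = s • g (n + 1)) (H1 : ∀ n, ⁅h1, g n⁆ = s • g (n + 2))
    (H01 : ⁅g 0, g 1⁆ = 0) : ∀ N m n, m + n = N → ⁅g m, g n⁆ = 0 := by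
  have key0 : ∀ m n, ⁅g m, g n⁆ = 0 → ⁅g (m + 1), g n⁆ = - ⁅g m, g (n + 1)⁆ := by
    intro m n h
    have := leibniz_lie h0 (g m) (g n)
    rw [h, lie_zero, H0, H0, smul_lie, lie_smul, ← smul_add] at this
    have := (smul_eq_zero.1 this.symm).resolve_left hs
    exact eq_neg_of_add_eq_zero_left this
  have key1 : ∀ m n, ⁅g m, g n⁆ = 0 → ⁅g (m + 2), g n⁆ = - ⁅g m, g (n + 2)⁆ := by
    intro m n h
    have := leibniz_lie h1 (g m) (g n)
    rw [h, lie_zero, H1, H1, smul_lie, lie_smul, ← smul_add] at this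
    have := (smul_eq_zero.1 this.symm).resolve_left hs
    exact eq_neg_of_add_eq_zero_left this
  intro N
  induction N using Nat.strong_induction_on with
  | _ N' ih' =>
    rcases N' with _ | N
    · intro m n h
      obtain ⟨rfl, rfl⟩ : m = 0 ∧ n = 0 := by omega
      exact lie_self _
    have ih := ih' N (by omega)
    have two : ∀ {a : L}, a = -a → a = 0 := by
      intro a h
      have h2 : (2 : ℂ) • a = 0 := by rw [two_smul]; nth_rewrite 1 [h]; simp
      exact (smul_eq_zero.1 h2).resolve_left (by norm_num)
    have alt : ∀ m n, m + n = N + 1 → ⁅g m, g n⁆ = (-1 : ℂ) ^ m • ⁅g 0, g (N + 1)⁆ := by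
      intro m
      induction m with
      | zero => intro n h; simp at h; subst h; simp
      | succ m ihm =>
        intro n h
        rw [key0 m n (ih m n (by omega)), ihm (n + 1) (by omega), pow_succ]; simp
    have zero : ⁅g 0, g (N + 1)⁆ = 0 := by
      rcases Nat.even_or_odd N with hN | hN
      · rcases Nat.eq_zero_or_pos N with rfl | hpos
        · exact H01
        · obtain ⟨M, rfl⟩ : ∃ M, N = M + 2 := by
            obtain ⟨k, rfl⟩ := hN; exact ⟨k + k - 2, by omega⟩
          have a1 := key1 0 (M + 1) (ih' (M + 1) (by omega) _ _ (by omega))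
          have a2 := alt 2 (M + 1) (by omega)
          simp only [even_two, Even.neg_pow, one_pow, one_smul] at a2
          rw [show (0 + 2 : ℕ) = 2 from rfl, a2] at a1
          exact two a1
      · have a2 := alt (N + 1) 0 (by omega)
        have : Even (N + 1) := hN.add_one
        rw [this.neg_one_pow, one_smul, ← lie_skew] at a2
        exact two a2.symm
    intro m n h
    rw [alt m n h, zero, smul_zero]

variable (hx : ⁅x, ⁅x, ⁅x, y⁆⁆⁆ = 0) (hy : ⁅y, ⁅y, ⁅y, x⁆⁆⁆ = 0)

include hx in
theorem e0e1 : ⁅le x y 0, le x y 1⁆ = 0 := by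
  simp only [le, lie_smul]
  rw [← lie_skew ⁅x, y⁆ x, lie_neg, hx]; simp

include hy in
theorem f0f1 : ⁅lf x y 0, lf x y 1⁆ = 0 := by
  simp only [lf, lie_smul]
  rw [← lie_skew ⁅x, y⁆ y, ← lie_skew x y, lie_neg, lie_neg, lie_neg, hy]
  simp only [neg_zero, smul_zero]

/-- if `⁅a, c⁆ = 0` then `⁅⁅a, b⁆, c⁆ = ⁅a, ⁅b, c⁆⁆` -/
theorem aux_lie1 {a b c : L} (h : ⁅a, c⁆ = 0) : ⁅⁅a, b⁆, c⁆ = ⁅a, ⁅b, c⁆⁆ := by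
  rw [lie_lie, h, lie_zero, sub_zero]

theorem aux_lie2 {a b c : L} (h : ⁅b, c⁆ = 0) : ⁅⁅a, b⁆, c⁆ = ⁅⁅a, c⁆, b⁆ := by
  rw [lie_lie, h, lie_zero, zero_sub, lie_skew]

/-- key step -/
theorem step (N : ℕ) (hN : ∀ m n, m + n = N → ⁅le x y m, lf x y n⁆ = lh x y N)
    (he : ⁅le x y N, le x y 0⁆ = 0) (hf : ⁅lf x y N, lf x y 0⁆ = 0) :
    ⁅lh x y N, le x y 0⁆ = (2 : ℂ) • le x y (N + 1) ∧
    ⁅lh x y N, lf x y 0⁆ = (-2 : ℂ) • lf x y (N + 1) ∧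
    ⁅lh x y 0, lh x y N⁆ = 0 ∧
    ∀ m n, m + n = N + 1 → ⁅le x y m, lf x y n⁆ = lh x y (N + 1) := by
  have A1 : ⁅lh x y N, le x y 0⁆ = (2 : ℂ) • le x y (N + 1) := by
    rw [← hN N 0 (by omega), aux_lie1 he, ← h0e, ← lie_skew (lf x y 0), lie_neg, lie_skew]
    rfl
  have A2 : ⁅lh x y N, lf x y 0⁆ = (-2 : ℂ) • lf x y (N + 1) := by
    rw [← hN 0 N (by omega), aux_lie2 hf, ← h0f]; rfl
  have A3 : ∀ m n, m + n = N → ⁅le x y (m + 1), lf x y n⁆ = ⁅le x y m, lf x y (n + 1)⁆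
      + (1 / 2 : ℂ) • ⁅lh x y 0, lh x y N⁆ := by
    intro m n h
    rw [← hN m n h, leibniz_lie (lh x y 0), h0e, h0f, smul_lie, lie_smul, smul_add, smul_smul,
      smul_smul, show (1 / 2 : ℂ) * 2 = 1 by norm_num, show (1 / 2 : ℂ) * (-2) = -1 by norm_num,
      one_smul, neg_smul, one_smul]
    abel
  have A4 : ⁅lh x y N, lh x y 0⁆ = (2 : ℂ) • ⁅le x y (N + 1), lf x y 0⁆
      - (2 : ℂ) • ⁅le x y 0, lf x y (N + 1)⁆ := by
    conv_lhs => rw [show lh x y 0 = ⁅le x y 0, lf x y 0⁆ from rfl]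
    rw [leibniz_lie, A1, A2, smul_lie, lie_smul, neg_smul, sub_eq_add_neg]
  have A5 : ∀ m n, m + n = N + 1 → ⁅le x y m, lf x y n⁆ = ⁅le x y 0, lf x y (N + 1)⁆
      + ((m : ℂ) / 2) • ⁅lh x y 0, lh x y N⁆ := by
    intro m
    induction m with
    | zero => intro n h; simp at h; subst h; simp
    | succ m ih =>
      intro n h
      rw [A3 m n (by omega), ih (n + 1) (by omega), add_assoc, ← add_smul]
      push_cast; congr 2; ring
  have A6 : ⁅lh x y 0, lh x y N⁆ = 0 := by
    have := A4
    rw [A5 (N + 1) 0 (by omega), ← lie_skew, smul_add, add_sub_cancel_left, smul_smul] at this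
    have h3 : ((N : ℂ) + 2) • ⁅lh x y 0, lh x y N⁆ = 0 := by
      have h4 : -⁅lh x y 0, lh x y N⁆ = ((N : ℂ) + 1) • ⁅lh x y 0, lh x y N⁆ := by
        rw [this]; push_cast; congr 1; ring
      have : ((N : ℂ) + 2) = (N + 1) + 1 := by ring
      rw [this, add_smul, ← h4, one_smul, neg_add_cancel]
    refine (smul_eq_zero.1 h3).resolve_left ?_
    exact_mod_cast (by omega : N + 2 ≠ 0)
  refine ⟨A1, A2, A6, ?_⟩
  intro m n h
  rw [A5 m n h, A6]; simp; rfl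

theorem hNe (N : ℕ) (h1 : ⁅lh x y N, le x y 0⁆ = (2 : ℂ) • le x y (N + 1))
    (h2 : ⁅lh x y 0, lh x y N⁆ = 0) (n : ℕ) :
    ⁅lh x y N, le x y n⁆ = (2 : ℂ) • le x y (N + n + 1) := by
  induction n with
  | zero => exact h1
  | succ n ih =>
    have : le x y (n + 1) = (1 / 2 : ℂ) • ⁅lh x y 0, le x y n⁆ := rfl
    rw [this, lie_smul, leibniz_lie, ← lie_skew (lh x y N) (lh x y 0), h2, ih, lie_smul, h0e]
    simp [smul_smul, add_assoc]

theorem hNf (N : ℕ) (h1 : ⁅lh x y N, lf x y 0⁆ = (-2 : ℂ) • lf x y (N + 1))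
    (h2 : ⁅lh x y 0, lh x y N⁆ = 0) (n : ℕ) :
    ⁅lh x y N, lf x y n⁆ = (-2 : ℂ) • lf x y (N + n + 1) := by
  induction n with
  | zero => exact h1
  | succ n ih =>
    have : lf x y (n + 1) = (-1 / 2 : ℂ) • ⁅lh x y 0, lf x y n⁆ := rfl
    rw [this, lie_smul, leibniz_lie, ← lie_skew (lh x y N) (lh x y 0), h2, ih, lie_smul, h0f]
    simp [smul_smul, add_assoc]; norm_num

include hx hy in
theorem loop_aux : (∀ m n, ⁅le x y m, le x y n⁆ = 0) ∧ (∀ m n, ⁅lf x y m, lf x y n⁆ = 0) := by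
  have s0 := step x y 0 (by
    intro m n h; obtain ⟨rfl, rfl⟩ : m = 0 ∧ n = 0 := by omega
    rfl) (lie_self _) (lie_self _)
  have s1 := step x y 1 s0.2.2.2 (by rw [← lie_skew, e0e1 x y hx, neg_zero])
    (by rw [← lie_skew, f0f1 x y hy, neg_zero])
  constructor
  · intro m n
    refine comm_of_shift (le x y) (lh x y 0) (lh x y 1) 2 (by norm_num) (h0e x y) ?_
      (e0e1 x y hx) _ m n rfl
    intro n
    rw [hNe x y 1 s1.1 s1.2.2.1]; congr 2; omega
  · intro m n
    refine comm_of_shift (lf x y) (lh x y 0) (lh x y 1) (-2) (by norm_num) (h0f x y) ?_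
      (f0f1 x y hy) _ m n rfl
    intro n
    rw [hNf x y 1 s1.2.1 s1.2.2.1]; congr 2; omega

include hx hy in
theorem loop_ef (m n : ℕ) : ⁅le x y m, lf x y n⁆ = lh x y (m + n) := by
  obtain ⟨ee, ff⟩ := loop_aux x y hx hy
  suffices H : ∀ N m n, m + n = N → ⁅le x y m, lf x y n⁆ = lh x y N from H _ m n rfl
  intro N
  induction N with
  | zero => intro m n h; obtain ⟨rfl, rfl⟩ : m = 0 ∧ n = 0 := by omega
            rfl
  | succ N ih => exact (step x y N ih (ee _ _) (ff _ _)).2.2.2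

include hx hy in
theorem loop_he (m n : ℕ) : ⁅lh x y m, le x y n⁆ = (2 : ℂ) • le x y (m + n + 1) := by
  obtain ⟨ee, ff⟩ := loop_aux x y hx hy
  have := step x y m (by rintro a b rfl; exact loop_ef x y hx hy a b) (ee _ _) (ff _ _)
  exact hNe x y m this.1 this.2.2.1 n

include hx hy in
theorem loop_hf (m n : ℕ) : ⁅lh x y m, lf x y n⁆ = (-2 : ℂ) • lf x y (m + n + 1) := by
  obtain ⟨ee, ff⟩ := loop_aux x y hx hy
  have := step x y m (by rintro a b rfl; exact loop_ef x y hx hy a b) (ee _ _) (ff _ _)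
  exact hNf x y m this.2.1 this.2.2.1 n

include hx hy in
theorem loop_hh (m n : ℕ) : ⁅lh x y m, lh x y n⁆ = 0 := by
  rw [show lh x y n = ⁅le x y 0, lf x y n⁆ from rfl, leibniz_lie, loop_he x y hx hy,
    loop_hf x y hx hy, smul_lie, lie_smul, loop_ef x y hx hy, loop_ef x y hx hy]
  rw [neg_smul, ← sub_eq_add_neg, sub_eq_zero]; congr 2; omega

end
end FF

namespace FF

universe u

structure LoopRep (N : Type u) [AddCommGroup N] [Module ℂ N] where
  e : ℕ → Module.End ℂ N
  f : ℕ → Module.End ℂ N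
  h : ℕ → Module.End ℂ N
  ee : ∀ m n u, e m (e n u) = e n (e m u)
  ff : ∀ m n u, f m (f n u) = f n (f m u)
  hh : ∀ m n u, h m (h n u) = h n (h m u)
  ef : ∀ m n u, e m (f n u) = f n (e m u) + h (m + n) u
  he : ∀ m n u, h m (e n u) = e n (h m u) + (2 : ℂ) • e (m + n + 1) u
  hf : ∀ m n u, h m (f n u) = f n (h m u) - (2 : ℂ) • f (m + n + 1) u

namespace LoopRep

/-- lowest weight vector condition -/
structure IsVac {N : Type u} [AddCommGroup N] [Module ℂ N] (R : LoopRep N) (v : N) : Prop where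
  e0 : R.e 0 v = 0
  f00 : R.f 0 (R.f 0 v) = 0

section
variable {N : Type u} [AddCommGroup N] [Module ℂ N] (R : LoopRep N)

theorem mcancel {a : N} (c : ℂ) (hc : c ≠ 0) (h : c • a = 0) : a = 0 :=
  (smul_eq_zero.1 h).resolve_left hc

theorem B1 {v : N} (hv : R.IsVac v) : R.f 1 v = - R.h 0 (R.f 0 v) := by
  have h1 := R.ef 0 0 (R.f 0 v)
  rw [hv.f00, map_zero, R.ef 0 0 v, hv.e0, map_zero, zero_add] at h1
  have h2 := R.hf 0 0 v
  simp only [Nat.add_zero, Nat.zero_add] at h1 h2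
  linear_combination (norm := module) (-1 / 2 : ℂ) • h1 + (1 / 2 : ℂ) • h2

theorem B2 {v : N} (hv : R.IsVac v) : R.f 0 (R.f 1 v) = 0 := by
  have h1 := congrArg (R.f 0) (R.B1 hv)
  rw [map_neg] at h1
  have h2 := R.hf 0 0 (R.f 0 v)
  rw [hv.f00, map_zero] at h2
  simp only [Nat.add_zero, Nat.zero_add] at h2
  have h3 := R.ff 0 1 v
  apply mcancel 3 (by norm_num)
  linear_combination (norm := module) h1 + h2 + (2 : ℂ) • h3

theorem B3 {v : N} (hv : R.IsVac v) :
    (2 : ℂ) • R.e 1 (R.f 0 v) = R.h 1 v + R.h 0 (R.h 0 v) := by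
  have h1 := congrArg (R.e 0) (R.B1 hv)
  rw [map_neg, R.ef, hv.e0, map_zero] at h1
  have h2 := R.he 0 0 (R.f 0 v)
  rw [R.ef 0 0 v, hv.e0, map_zero, zero_add] at h2
  simp only [Nat.add_zero, Nat.zero_add] at h1 h2
  linear_combination (norm := module) -h1 - h2

theorem B4 {v : N} (hv : R.IsVac v) : R.h 0 (R.e 1 v) = R.e 2 v := by
  have h1 := congrArg (R.e 0) (R.B3 hv)
  rw [map_smul, map_add, R.ee 0 1, R.ef 0 0 v, hv.e0, map_zero, zero_add] at h1
  have h2 := R.he 0 0 (R.h 0 v)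
  have h3 := R.he 0 0 v
  have h4 := R.he 1 0 v
  have h5 := R.he 0 1 v
  simp only [Nat.add_zero, Nat.zero_add, hv.e0, map_zero] at h1 h2 h3 h4 h5
  have h6 := congrArg (R.h 0) h3
  rw [map_zero, map_add, map_smul] at h6
  apply sub_eq_zero.1
  apply mcancel 6 (by norm_num)
  linear_combination (norm := module) h1 - h2 - h4 - h6 + (4 : ℂ) • h5

theorem B5 {v : N} (hv : R.IsVac v) : R.e 1 (R.e 1 v) = 0 := by
  have h1 := congrArg (R.e 0) (R.B4 hv)
  have h2 := R.he 0 0 (R.e 1 v)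
  rw [R.ee 0 1 v, hv.e0] at h2
  rw [R.ee 0 2 v, hv.e0] at h1
  simp only [Nat.add_zero, Nat.zero_add, map_zero] at h1 h2
  apply mcancel 2 (by norm_num)
  linear_combination (norm := module) -h1 - h2

/-- the twisted double -/
noncomputable def tw (a b : Module.End ℂ N) : Module.End ℂ (N × N) :=
  LinearMap.prod (a.comp (LinearMap.fst ℂ N N) + b.comp (LinearMap.snd ℂ N N))
    (a.comp (LinearMap.snd ℂ N N))

@[simp] theorem tw_apply (a b : Module.End ℂ N) (u : N × N) :
    tw a b u = (a u.1 + b u.2, a u.2) := rfl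

noncomputable def double : LoopRep (N × N) where
  e n := tw (R.e n) ((n : ℂ) • R.e (n + 1))
  f n := tw (R.f n) (((n : ℂ) + 1) • R.f (n + 1))
  h n := tw (R.h n) (((n : ℂ) + 1) • R.h (n + 1))
  ee m n u := by
    ext
    · simp only [tw_apply, map_add, map_smul, LinearMap.smul_apply, R.ee m n u.1, R.ee (m + 1) n u.2,
        R.ee m (n + 1) u.2]
      module
    · simp [R.ee m n]
  ff m n u := by
    ext
    · simp only [tw_apply, map_add, map_smul, LinearMap.smul_apply, R.ff m n u.1, R.ff (m + 1) n u.2,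
        R.ff m (n + 1) u.2]
      module
    · simp [R.ff m n]
  hh m n u := by
    ext
    · simp only [tw_apply, map_add, map_smul, LinearMap.smul_apply, R.hh m n u.1, R.hh (m + 1) n u.2,
        R.hh m (n + 1) u.2]
      module
    · simp [R.hh m n]
  ef m n u := by
    ext
    · simp only [tw_apply, map_add, map_smul, LinearMap.smul_apply, R.ef m n u.1, R.ef (m + 1) n u.2,
        R.ef m (n + 1) u.2, Prod.fst_add, show m + 1 + n = m + n + 1 by omega,
        show m + (n + 1) = m + n + 1 by omega]
      push_cast
      module
    · simp [R.ef m n]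
  he m n u := by
    ext
    · simp only [tw_apply, map_add, map_smul, LinearMap.smul_apply, R.he m n u.1, R.he (m + 1) n u.2,
        R.he m (n + 1) u.2, Prod.fst_add, Prod.smul_fst, show m + 1 + n + 1 = m + n + 1 + 1 by omega,
        show m + (n + 1) + 1 = m + n + 1 + 1 by omega]
      push_cast
      module
    · simp [R.he m n]
  hf m n u := by
    ext
    · simp only [tw_apply, map_add, map_smul, LinearMap.smul_apply, R.hf m n u.1, R.hf (m + 1) n u.2,
        R.hf m (n + 1) u.2, Prod.fst_sub, Prod.smul_fst, show m + 1 + n + 1 = m + n + 1 + 1 by omega,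
        show m + (n + 1) + 1 = m + n + 1 + 1 by omega]
      push_cast
      module
    · simp [R.hf m n]

theorem double_e (n : ℕ) (u : N × N) :
    R.double.e n u = (R.e n u.1 + (n : ℂ) • R.e (n + 1) u.2, R.e n u.2) := rfl
theorem double_f (n : ℕ) (u : N × N) :
    R.double.f n u = (R.f n u.1 + ((n : ℂ) + 1) • R.f (n + 1) u.2, R.f n u.2) := rfl
theorem double_h (n : ℕ) (u : N × N) :
    R.double.h n u = (R.h n u.1 + ((n : ℂ) + 1) • R.h (n + 1) u.2, R.h n u.2) := rfl

theorem double_vac {v : N} (hv : R.IsVac v) : R.double.IsVac (0, v) := by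
  constructor
  · rw [double_e]; simp [hv.e0]
  · rw [double_f, double_f]
    simp only [map_zero, zero_add, hv.f00, Nat.cast_zero, one_smul, R.B2 hv, R.ff 1 0 v,
      Prod.mk_zero_zero]

end

open Finset in
theorem sum_shift {N : Type*} [AddCommGroup N] [Module ℂ N] (T : ℕ → ℕ → N) (n : ℕ) :
    ∑ q ∈ antidiagonal n, (((q.2 : ℂ) + 1) • T q.1 (q.2 + 1) + ((q.1 : ℂ) + 1) • T (q.1 + 1) q.2)
      = ((n : ℂ) + 1) • ∑ q ∈ antidiagonal (n + 1), T q.1 q.2 := by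
  rw [sum_add_distrib]
  have h1 : ∑ q ∈ antidiagonal (n + 1), (q.1 : ℂ) • T q.1 q.2 =
      ∑ q ∈ antidiagonal n, ((q.1 : ℂ) + 1) • T (q.1 + 1) q.2 := by
    rw [Finset.Nat.sum_antidiagonal_succ]; simp
  have h2 : ∑ q ∈ antidiagonal (n + 1), (q.2 : ℂ) • T q.1 q.2 =
      ∑ q ∈ antidiagonal n, ((q.2 : ℂ) + 1) • T q.1 (q.2 + 1) := by
    rw [Finset.Nat.sum_antidiagonal_succ']; simp
  rw [← h1, ← h2, ← sum_add_distrib, smul_sum]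
  refine sum_congr rfl ?_
  rintro ⟨i, j⟩ hq
  rw [HasAntidiagonal.mem_antidiagonal] at hq
  have : (n : ℂ) + 1 = (i : ℂ) + j := by
    have h3 : i + j = n + 1 := hq
    exact_mod_cast h3.symm
  simp only [this]; module

open Finset in
theorem fR (n : ℕ) : ∀ {N : Type u} [AddCommGroup N] [Module ℂ N] (R : LoopRep N) {v : N},
    R.IsVac v → ((n : ℂ) + 1) • R.f (n + 1) v = - ∑ q ∈ antidiagonal n, R.h q.1 (R.f q.2 v) := by
  induction n with
  | zero => intro N _ _ R v hv; simp [R.B1 hv]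
  | succ n ih =>
    intro N _ _ R v hv
    have h := congrArg Prod.fst (ih R.double (R.double_vac hv))
    rw [Prod.fst_neg, Prod.fst_sum] at h
    simp only [double_f, double_h, map_zero, zero_add, map_smul, Prod.smul_fst] at h
    rw [sum_shift (fun i j => R.h i (R.f j v)) n, ← smul_neg] at h
    push_cast at h ⊢
    exact smul_right_injective N (by exact_mod_cast (by omega : n + 1 ≠ 0) : (n : ℂ) + 1 ≠ 0) h

open Finset in
theorem eR (n : ℕ) : ∀ {N : Type u} [AddCommGroup N] [Module ℂ N] (R : LoopRep N) {v : N},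
    R.IsVac v → ((n : ℂ) + 1) • R.e (n + 2) v =
      ∑ q ∈ antidiagonal n, R.h q.1 (R.e (q.2 + 1) v) := by
  induction n with
  | zero => intro N _ _ R v hv; simp [R.B4 hv]
  | succ n ih =>
    intro N _ _ R v hv
    have h := congrArg Prod.fst (ih R.double (R.double_vac hv))
    rw [Prod.fst_sum] at h
    simp only [double_e, double_h, map_zero, zero_add, map_smul, Prod.smul_fst] at h
    push_cast at h ⊢
    rw [sum_shift (fun i j => R.h i (R.e (j + 1) v)) n] at h
    have h' := smul_right_injective N
      (by exact_mod_cast (by omega : n + 1 ≠ 0) : (n : ℂ) + 1 ≠ 0) h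
    rw [← h']; congr 1; ring

open Finset in
theorem fQ (n : ℕ) : ∀ {N : Type u} [AddCommGroup N] [Module ℂ N] (R : LoopRep N) {v : N},
    R.IsVac v → ∑ q ∈ antidiagonal n, R.f q.1 (R.f q.2 v) = 0 := by
  induction n with
  | zero => intro N _ _ R v hv; simp [hv.f00]
  | succ n ih =>
    intro N _ _ R v hv
    have h := congrArg Prod.fst (ih R.double (R.double_vac hv))
    rw [Prod.fst_sum] at h
    simp only [double_f, map_zero, zero_add, map_smul] at h
    rw [sum_shift (fun i j => R.f i (R.f j v)) n] at h
    exact mcancel _ (by exact_mod_cast (by omega : n + 1 ≠ 0)) h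

open Finset in
theorem eQ (n : ℕ) : ∀ {N : Type u} [AddCommGroup N] [Module ℂ N] (R : LoopRep N) {v : N},
    R.IsVac v → ∑ q ∈ antidiagonal n, R.e (q.1 + 1) (R.e (q.2 + 1) v) = 0 := by
  induction n with
  | zero => intro N _ _ R v hv; simp [R.B5 hv]
  | succ n ih =>
    intro N _ _ R v hv
    have h := congrArg Prod.fst (ih R.double (R.double_vac hv))
    rw [Prod.fst_sum] at h
    simp only [double_e, map_zero, zero_add, map_smul] at h
    push_cast at h
    rw [sum_shift (fun i j => R.e (i + 1) (R.e (j + 1) v)) n] at h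
    exact mcancel _ (by exact_mod_cast (by omega : n + 1 ≠ 0)) h

end LoopRep

/-- chain hypothesis -/
structure Chain {N : Type*} [AddCommGroup N] [Module ℂ N] (g k : ℕ → Module.End ℂ N) (v : N) :
    Prop where
  gg : ∀ m n u, g m (g n u) = g n (g m u)
  kg : ∀ m n u, k m (g n u) = g n (k m u) + (2 : ℂ) • g (m + n + 1) u
  Q : ∀ n, ∑ q ∈ Finset.HasAntidiagonal.antidiagonal n, g q.1 (g q.2 v) = 0
  R : ∀ n : ℕ, ((n : ℂ) + 1) • g (n + 1) v = ∑ q ∈ Finset.HasAntidiagonal.antidiagonal n, k q.1 (g q.2 v)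

namespace Chain
variable {N : Type*} [AddCommGroup N] [Module ℂ N] {g k : ℕ → Module.End ℂ N} {v : N}

theorem g00 (c : Chain g k v) : g 0 (g 0 v) = 0 := by simpa using c.Q 0

theorem g10 (c : Chain g k v) : g 1 (g 0 v) = 0 := by
  have := c.Q 1
  simp only [Finset.Nat.antidiagonal_succ, Finset.Nat.antidiagonal_zero] at this
  simp [c.gg 0 1 v] at this
  apply LoopRep.mcancel 2 (by norm_num)
  rw [two_smul]; exact this

theorem g01 (c : Chain g k v) : g 0 (g 1 v) = 0 := by rw [c.gg, c.g10]

theorem next (c : Chain g k v) : Chain (fun n => g (n + 2)) k (g 0 v) where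
  gg m n u := c.gg _ _ u
  kg m n u := by
    have := c.kg m (n + 2) u
    rw [show m + (n + 2) + 1 = m + n + 1 + 2 by omega] at this
    exact this
  Q n := by
    have h := congrArg (g 0) (c.Q (n + 4))
    rw [map_zero, map_sum] at h
    have h' : ∑ q ∈ Finset.HasAntidiagonal.antidiagonal (n + 4), g q.1 (g q.2 (g 0 v)) = 0 := by
      rw [← h]; refine Finset.sum_congr rfl fun q _ => ?_
      rw [c.gg q.2 0, c.gg q.1 0]
    rw [Finset.Nat.sum_antidiagonal_succ, Finset.Nat.sum_antidiagonal_succ,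
      Finset.Nat.sum_antidiagonal_succ', Finset.Nat.sum_antidiagonal_succ'] at h'
    simp only [c.g00, c.g10, map_zero, zero_add, c.gg 0, c.gg (0 + 1)] at h'
    exact h'
  R n := by
    have h := congrArg (g 0) (c.R (n + 2))
    rw [map_smul, map_sum] at h
    have e1 : ∀ i j, g 0 (k i (g j v)) = k i (g j (g 0 v)) - (2 : ℂ) • g (i + 1) (g j v) := by
      intro i j
      rw [c.gg j 0 v, c.kg i 0]; simp
    simp only [e1] at h
    rw [Finset.sum_sub_distrib, ← Finset.smul_sum] at h
    have h2 := c.Q (n + 3)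
    rw [Finset.Nat.sum_antidiagonal_succ] at h2
    rw [Finset.Nat.sum_antidiagonal_succ', Finset.Nat.sum_antidiagonal_succ'] at h
    simp only [c.g00, c.g10, map_zero, zero_add] at h
    rw [c.gg (n + 1 + 2) 0 v]
    simp only [show n + 2 + 1 = n + 3 by omega] at h h2 ⊢
    push_cast at h ⊢
    have h4 := eq_neg_of_add_eq_zero_right h2
    rw [h4] at h
    linear_combination (norm := module) h

/-- extremal vectors -/
def vec (g : ℕ → Module.End ℂ N) (v : N) : ℕ → N
  | 0 => v
  | r + 1 => g (2 * r) (vec g v r)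

theorem iter (c : Chain g k v) (r : ℕ) : Chain (fun n => g (n + 2 * r)) k (vec g v r) ∧
    ∀ n < 2 * r, g n (vec g v r) = 0 := by
  induction r with
  | zero => exact ⟨c, by intro n hn; omega⟩
  | succ r ih =>
    obtain ⟨c', hz⟩ := ih
    refine ⟨?_, ?_⟩
    · have := c'.next
      simp only [Nat.zero_add, show ∀ n, n + 2 + 2 * r = n + 2 * (r + 1) by intro n; omega] at this
      exact this
    · intro n hn
      rw [vec]
      have h0 := c'.g00
      have h1 := c'.g10
      simp only [Nat.zero_add] at h0 h1
      rcases (by omega : n < 2 * r ∨ n = 2 * r ∨ n = 1 + 2 * r) with h | h | h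
      · rw [c.gg, hz n h, map_zero]
      · rw [h, h0]
      · rw [h, h1]

/-- submodules closed under `k` containing `g 0 v` contain all `g n v` -/
theorem mem (c : Chain g k v) (S : Submodule ℂ N) (hS : ∀ i, ∀ u ∈ S, k i u ∈ S)
    (h0 : g 0 v ∈ S) (n : ℕ) : g n v ∈ S := by
  induction n using Nat.strong_induction_on with
  | _ n ih =>
    rcases n with _ | n
    · exact h0
    · have h : ((n : ℂ) + 1) • g (n + 1) v ∈ S := by
        rw [c.R n]
        refine S.sum_mem fun q hq => hS _ _ (ih _ ?_)
        have := Finset.HasAntidiagonal.mem_antidiagonal.1 hq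
        omega
      exact (S.smul_mem_iff (by exact_mod_cast (by omega : n + 1 ≠ 0))).1 h

theorem vec_mem (c : Chain g k v) (r : ℕ) (S : Submodule ℂ N) (hS : ∀ i, ∀ u ∈ S, k i u ∈ S)
    (h0 : vec g v (r + 1) ∈ S) (n : ℕ) : g n (vec g v r) ∈ S := by
  by_cases hn : n < 2 * r
  · rw [(c.iter r).2 n hn]; exact S.zero_mem
  · have := (c.iter r).1.mem S hS (by simpa [vec] using h0) (n - 2 * r)
    simpa [Nat.sub_add_cancel (not_lt.1 hn)] using this

end Chain
end FF

namespace FF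

universe u

section
variable {N : Type*} [AddCommGroup N] [Module ℂ N]

/-- words in commuting operators -/
def hl (k : ℕ → Module.End ℂ N) : List ℕ → N → N
  | [], v => v
  | i :: l, v => k i (hl k l v)

/-- cyclic submodule -/
def CS (k : ℕ → Module.End ℂ N) (v : N) : Submodule ℂ N :=
  Submodule.span ℂ (Set.range fun l => hl k l v)

theorem CS_self (k : ℕ → Module.End ℂ N) (v : N) : v ∈ CS k v :=
  Submodule.subset_span ⟨[], rfl⟩

theorem CS_stable (k : ℕ → Module.End ℂ N) (v : N) (i : ℕ) (u : N) (hu : u ∈ CS k v) :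
    k i u ∈ CS k v := by
  have : CS k v ≤ (CS k v).comap (k i) := by
    conv_lhs => rw [CS]
    rw [Submodule.span_le]
    rintro _ ⟨l, rfl⟩
    exact Submodule.subset_span ⟨i :: l, rfl⟩
  exact this hu

theorem CS_le (k : ℕ → Module.End ℂ N) (v : N) (S : Submodule ℂ N)
    (hS : ∀ i, ∀ u ∈ S, k i u ∈ S) (hv : v ∈ S) : CS k v ≤ S := by
  rw [CS, Submodule.span_le]
  rintro _ ⟨l, rfl⟩
  induction l with
  | nil => exact hv
  | cons i l ih => exact hS _ _ ih

theorem CS_map (k g : ℕ → Module.End ℂ N) (s : ℂ)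
    (hkg : ∀ m n u, k m (g n u) = g n (k m u) + s • g (m + n + 1) u)
    (v : N) (T : Submodule ℂ N) (hT : ∀ i, ∀ u ∈ T, k i u ∈ T) (hv : ∀ n, g n v ∈ T)
    (u : N) (hu : u ∈ CS k v) (n : ℕ) : g n u ∈ T := by
  have : CS k v ≤ ⨅ n, T.comap (g n) := by
    apply CS_le
    · intro i u hu
      simp only [Submodule.mem_iInf, Submodule.mem_comap] at hu ⊢
      intro n
      have : g n (k i u) = k i (g n u) - s • g (i + n + 1) u := by rw [hkg]; simp
      rw [this]
      exact T.sub_mem (hT _ _ (hu n)) (T.smul_mem _ (hu _))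
    · simpa using hv
  have := this hu
  simp only [Submodule.mem_iInf, Submodule.mem_comap] at this
  exact this n

end

namespace LoopRep

theorem CS_double {N : Type u} [AddCommGroup N] [Module ℂ N] (R : LoopRep N) (v : N)
    (u : N × N) (hu : u ∈ CS R.double.h (0, v)) : u.1 ∈ CS R.h v := by
  have : CS R.double.h (0, v) ≤ (CS R.h v).prod (CS R.h v) := by
    apply CS_le
    · rintro i ⟨u1, u2⟩ ⟨h1, h2⟩
      rw [double_h]
      exact ⟨Submodule.add_mem _ (CS_stable _ _ _ _ h1) (Submodule.smul_mem _ _ (CS_stable _ _ _ _ h2)),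
        CS_stable _ _ _ _ h2⟩
    · exact ⟨Submodule.zero_mem _, CS_self _ _⟩
  exact (this hu).1

theorem X (d : ℕ) : ∀ {N : Type u} [AddCommGroup N] [Module ℂ N] (R : LoopRep N) {v : N},
    R.IsVac v → ∀ i j, i + j = d → R.e i (R.f j v) ∈ CS R.h v := by
  induction d with
  | zero =>
    intro N _ _ R v hv i j hij
    obtain ⟨rfl, rfl⟩ : i = 0 ∧ j = 0 := by omega
    rw [R.ef, hv.e0, map_zero, zero_add]
    exact CS_stable _ _ _ _ (CS_self _ _)
  | succ d ih =>
    intro N _ _ R v hv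
    have hself := CS_self R.h v
    have hst := CS_stable R.h v
    have star : ∀ i j, i + j = d → ((j : ℂ) + 1) • R.e i (R.f (j + 1) v)
        + (i : ℂ) • R.e (i + 1) (R.f j v) ∈ CS R.h v := by
      intro i j hij
      have := CS_double R v _ (ih R.double (R.double_vac hv) i j hij)
      rw [double_f, double_e] at this
      simpa using this
    intro i
    induction i with
    | zero =>
      intro j _
      rw [R.ef, hv.e0, map_zero, zero_add]
      exact hst _ _ hself
    | succ i ihi =>
      intro j hij
      have hij' : i + j = d := by omega
      rcases i with _ | i
      · rcases j with _ | j
        · rw [← Submodule.smul_mem_iff _ (two_ne_zero : (2 : ℂ) ≠ 0), R.B3 hv]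
          exact Submodule.add_mem _ (hst _ _ hself) (hst _ _ (hst _ _ hself))
        · have h1 := star 1 j (by omega)
          have h2 := ih R hv 1 j (by omega)
          have h3 := congrArg (R.f j) (R.B4 hv)
          have h4 := R.hf 0 j (R.e 1 v)
          have h5 := R.ef 1 j v
          have h6 := R.ef 1 (j + 1) v
          have h7 := R.ef 2 j v
          have h5' := congrArg (R.h 0) h5
          simp only [map_add, Nat.zero_add, show 1 + (j + 1) = 2 + j by omega] at h5' h4 h5 h6 h7
          have key : ((j : ℂ) + 3) • R.e 1 (R.f (j + 1) v) =
              (((j : ℂ) + 1) • R.e 1 (R.f (j + 1) v) + (((1 : ℕ) : ℂ)) • R.e (1 + 1) (R.f j v))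
              - R.h 0 (R.e 1 (R.f j v)) + R.h 0 (R.h (1 + j) v) + R.h (2 + j) v := by
            push_cast
            linear_combination (norm := module) h3 + h4 + h5' + (2 : ℂ) • h6 - h7
          rw [Nat.zero_add, ← Submodule.smul_mem_iff _
            (by exact_mod_cast (by omega : j + 3 ≠ 0) : (j : ℂ) + 3 ≠ 0), key]
          exact Submodule.add_mem _ (Submodule.add_mem _ (Submodule.sub_mem _ h1 (hst _ _ h2))
            (hst _ _ (hst _ _ hself))) (hst _ _ hself)
      · have h1 := star (i + 1) j hij'
        have h2 := ihi (j + 1) (by omega)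
        have h3 := (Submodule.add_mem_iff_right _ (Submodule.smul_mem _ ((j : ℂ) + 1) h2)).1 h1
        exact (Submodule.smul_mem_iff _ (by exact_mod_cast (by omega : i + 1 ≠ 0))).1 h3

section
variable {N : Type u} [AddCommGroup N] [Module ℂ N] (R : LoopRep N)

/-- extremal vectors -/
def vv (v : N) : ℤ → N
  | Int.ofNat r => Chain.vec (fun n => R.e (n + 1)) v r
  | Int.negSucc r => Chain.vec R.f v (r + 1)

theorem vv_nat (v : N) (r : ℕ) : R.vv v (r : ℤ) = Chain.vec (fun n => R.e (n + 1)) v r := rfl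
theorem vv_neg (v : N) (r : ℕ) : R.vv v (-(r : ℤ)) = Chain.vec R.f v r := by
  rcases r with _ | r
  · rfl
  · rfl

theorem chain_f {v : N} (hv : R.IsVac v) : Chain R.f (fun n => - R.h n) v where
  gg := R.ff
  kg m n u := by simp only [LinearMap.neg_apply, R.hf, map_neg]; module
  Q n := fQ n R hv
  R n := by simpa using fR n R hv

theorem chain_e {v : N} (hv : R.IsVac v) : Chain (fun n => R.e (n + 1)) R.h v where
  gg m n := R.ee _ _
  kg m n u := R.he _ _ _
  Q n := eQ n R hv
  R n := eR n R hv

theorem f_down {v : N} (hv : R.IsVac v) (r n : ℕ) :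
    R.f n (Chain.vec R.f v r) ∈ CS R.h (Chain.vec R.f v (r + 1)) :=
  (R.chain_f hv).vec_mem r _ (fun i u hu => by
    simpa using CS_stable _ _ i u hu) (CS_self _ _) n

theorem e0_vec {v : N} (hv : R.IsVac v) (r : ℕ) :
    R.e 0 (Chain.vec (fun n => R.e (n + 1)) v r) = 0 := by
  induction r with
  | zero => exact hv.e0
  | succ r ih => rw [Chain.vec, R.ee, ih, map_zero]

theorem e_up {v : N} (hv : R.IsVac v) (r n : ℕ) :
    R.e n (Chain.vec (fun n => R.e (n + 1)) v r) ∈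
      CS R.h (Chain.vec (fun n => R.e (n + 1)) v (r + 1)) := by
  rcases n with _ | n
  · rw [R.e0_vec hv]; exact Submodule.zero_mem _
  · exact (R.chain_e hv).vec_mem r _ (fun i u hu => CS_stable _ _ i u hu) (CS_self _ _) n

theorem CS_f (v : N) (w : N) (hv : ∀ n, R.f n v ∈ CS R.h w) (u : N) (hu : u ∈ CS R.h v) (n : ℕ) :
    R.f n u ∈ CS R.h w :=
  CS_map R.h R.f (-2) (fun m n u => by rw [R.hf]; module) v _ (CS_stable _ _) hv u hu n

theorem CS_e (v : N) (w : N) (hv : ∀ n, R.e n v ∈ CS R.h w) (u : N) (hu : u ∈ CS R.h v) (n : ℕ) :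
    R.e n u ∈ CS R.h w :=
  CS_map R.h R.e 2 (fun m n u => by rw [R.he]) v _ (CS_stable _ _) hv u hu n

theorem e_down {v : N} (hv : R.IsVac v) (r : ℕ) : ∀ n,
    R.e n (Chain.vec R.f v (r + 1)) ∈ CS R.h (Chain.vec R.f v r) := by
  induction r with
  | zero => intro n; exact X _ R hv n 0 rfl
  | succ r ih =>
    intro n
    rw [show Chain.vec R.f v (r + 1 + 1) = R.f (2 * (r + 1)) (Chain.vec R.f v (r + 1)) from rfl, R.ef]
    exact Submodule.add_mem _ (R.CS_f _ _ (R.f_down hv r) _ (ih n) _)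
      (CS_stable _ _ _ _ (CS_self _ _))

theorem f_up {v : N} (hv : R.IsVac v) (r : ℕ) : ∀ n,
    R.f n (Chain.vec (fun n => R.e (n + 1)) v (r + 1)) ∈
      CS R.h (Chain.vec (fun n => R.e (n + 1)) v r) := by
  induction r with
  | zero =>
    intro n
    have h1 := X _ R hv 1 n rfl
    rw [R.ef] at h1
    exact (Submodule.add_mem_iff_left _ (CS_stable _ _ _ _ (CS_self _ _))).1 h1
  | succ r ih =>
    intro n
    rw [Chain.vec]
    have h1 := R.CS_e _ _ (R.e_up hv r) _ (ih n) (2 * (r + 1) + 1)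
    rw [R.ef] at h1
    exact (Submodule.add_mem_iff_left _ (CS_stable _ _ _ _ (CS_self _ _))).1 h1

theorem vv_e {v : N} (hv : R.IsVac v) (c : ℤ) (n : ℕ) : R.e n (R.vv v c) ∈ CS R.h (R.vv v (c + 1)) := by
  rcases c with r | r
  · exact R.e_up hv r n
  · have := R.e_down hv r n
    rw [show Int.negSucc r + 1 = -(r : ℤ) by omega, vv_neg]
    exact this

theorem vv_f {v : N} (hv : R.IsVac v) (c : ℤ) (n : ℕ) : R.f n (R.vv v c) ∈ CS R.h (R.vv v (c - 1)) := by
  rcases lt_or_ge 0 c with h | h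
  · obtain ⟨r, rfl⟩ : ∃ r : ℕ, c = ((r + 1 : ℕ) : ℤ) := ⟨(c - 1).toNat, by omega⟩
    rw [show ((r + 1 : ℕ) : ℤ) - 1 = (r : ℤ) by omega, vv_nat, vv_nat]
    exact R.f_up hv r n
  · obtain ⟨r, rfl⟩ : ∃ r : ℕ, c = -(r : ℤ) := ⟨(-c).toNat, by omega⟩
    rw [show -(r : ℤ) - 1 = -((r + 1 : ℕ) : ℤ) by omega, vv_neg, vv_neg]
    exact R.f_down hv r n

/-- the whole span -/
def Sp (v : N) : Submodule ℂ N := ⨆ c : ℤ, CS R.h (R.vv v c)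

theorem Sp_v (v : N) : v ∈ R.Sp v := by
  have := CS_self R.h (R.vv v 0)
  exact Submodule.mem_iSup_of_mem (p := fun c : ℤ => CS R.h (R.vv v c)) 0 this

theorem Sp_aux (v : N) (g : Module.End ℂ N) (hg : ∀ c, ∀ u ∈ CS R.h (R.vv v c), g u ∈ R.Sp v)
    (u : N) (hu : u ∈ R.Sp v) : g u ∈ R.Sp v := by
  have : R.Sp v ≤ (R.Sp v).comap g := iSup_le fun c u hu => hg c u hu
  exact this hu

theorem Sp_e {v : N} (hv : R.IsVac v) (n : ℕ) (u : N) (hu : u ∈ R.Sp v) : R.e n u ∈ R.Sp v :=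
  R.Sp_aux v _ (fun c u hu => Submodule.mem_iSup_of_mem (p := fun c : ℤ => CS R.h (R.vv v c)) (c + 1)
    (R.CS_e _ _ (R.vv_e hv c) u hu n)) u hu

theorem Sp_f {v : N} (hv : R.IsVac v) (n : ℕ) (u : N) (hu : u ∈ R.Sp v) : R.f n u ∈ R.Sp v :=
  R.Sp_aux v _ (fun c u hu => Submodule.mem_iSup_of_mem (p := fun c : ℤ => CS R.h (R.vv v c)) (c - 1)
    (R.CS_f _ _ (R.vv_f hv c) u hu n)) u hu

end
end LoopRep
end FF

namespace FF
open PowerSeries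

theorem ode_unique {A : Type*} [CommRing A] [Algebra ℂ A] (G T U : PowerSeries A)
    (hT : d⁄dX A T = G * T) (hU : d⁄dX A U = G * U)
    (h0 : coeff 0 T = coeff 0 U) : T = U := by
  ext n
  induction n using Nat.strong_induction_on with
  | _ n ih =>
    rcases n with _ | n
    · exact h0
    · have h1 := congrArg (coeff n) hT
      have h2 := congrArg (coeff n) hU
      rw [PowerSeries.coeff_derivative, coeff_mul] at h1 h2
      have h3 : coeff (n + 1) T * ((n : A) + 1) = coeff (n + 1) U * ((n : A) + 1) := by
        rw [h1, h2]
        refine Finset.sum_congr rfl fun q hq => ?_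
        have := Finset.HasAntidiagonal.mem_antidiagonal.1 hq
        rw [ih q.2 (by omega)]
      have hn : IsUnit ((n : A) + 1) := by
        have := (IsUnit.mk0 ((n : ℂ) + 1) (by exact_mod_cast (by omega : n + 1 ≠ 0))).map
          (algebraMap ℂ A)
        simpa using this
      exact hn.mul_left_injective h3

abbrev BB := MvPolynomial ℕ ℂ
abbrev PB := Polynomial BB

open Finset in
noncomputable def ss (ε : ℂ) : ℕ → BB
  | 0 => 1
  | n + 1 => (ε / ((n : ℂ) + 1)) • ∑ i : Fin (n + 1), MvPolynomial.X (n - i) * ss ε i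

theorem ss_succ (ε : ℂ) (n : ℕ) : ((n : ℂ) + 1) • ss ε (n + 1) =
    ε • ∑ q ∈ Finset.HasAntidiagonal.antidiagonal n, (MvPolynomial.X q.1 : BB) * ss ε q.2 := by
  rw [ss, smul_smul, mul_div_cancel₀ _ (by exact_mod_cast (by omega : n + 1 ≠ 0))]
  congr 1
  rw [Fin.sum_univ_eq_sum_range (fun i => (MvPolynomial.X (n - i) : BB) * ss ε i),
    Finset.Nat.sum_antidiagonal_eq_sum_range_succ_mk, ← Finset.sum_range_reflect]
  refine Finset.sum_congr rfl fun i hi => ?_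
  have := Finset.mem_range.1 hi
  rw [show n - (n + 1 - 1 - i) = i by omega, show n + 1 - 1 - i = n - i by omega]

noncomputable def SS (ε : ℂ) : PowerSeries BB := PowerSeries.mk (ss ε)
noncomputable def xx : PowerSeries BB := PowerSeries.mk (fun i => MvPolynomial.X i)

theorem SS_ode (ε : ℂ) : d⁄dX BB (SS ε) = (ε • xx) * SS ε := by
  ext1 n
  rw [PowerSeries.coeff_derivative, smul_mul_assoc, PowerSeries.coeff_smul, coeff_mul]
  simp only [SS, xx, coeff_mk]
  rw [← ss_succ, Algebra.smul_def, mul_comm]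
  simp

/-- the substitution -/
noncomputable def RR (σ : ℂ) : BB →ₐ[ℂ] PB :=
  MvPolynomial.aeval (fun i => Polynomial.C (MvPolynomial.X i) + σ • (Polynomial.X : PB) ^ (i + 1))

theorem RR_X (σ : ℂ) (i : ℕ) : RR σ (MvPolynomial.X i) =
    Polynomial.C (MvPolynomial.X i) + σ • (Polynomial.X : PB) ^ (i + 1) := by
  rw [RR, MvPolynomial.aeval_X]


section
variable {A : Type*} [CommRing A] [Algebra ℂ A] (t : A)

noncomputable def UU : PowerSeries A := PowerSeries.mk (fun i => t ^ i)
noncomputable def gg : PowerSeries A := PowerSeries.mk (fun i => t ^ (i + 1))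
noncomputable def VV : PowerSeries A := 1 - PowerSeries.X * PowerSeries.C t

theorem UU_ode : d⁄dX A (UU t) = gg t * UU t := by
  ext1 n
  rw [PowerSeries.coeff_derivative, coeff_mul]
  simp only [UU, gg, coeff_mk]
  rw [Finset.sum_congr rfl (g := fun _ => t ^ (n + 1))]
  · simp [mul_comm]
  · intro q hq
    have := Finset.HasAntidiagonal.mem_antidiagonal.1 hq
    rw [← pow_add, show q.1 + 1 + q.2 = n + 1 by omega]

theorem gg_VV : gg t * VV t = PowerSeries.C t := by
  ext1 n
  rw [VV, mul_sub, mul_one, ← mul_assoc, map_sub, PowerSeries.coeff_mul_C]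
  rcases n with _ | n
  · simp [gg]
  · rw [PowerSeries.coeff_succ_mul_X]
    simp [gg, PowerSeries.coeff_C, pow_succ]

theorem VV_ode : d⁄dX A (VV t) = - (gg t * VV t) := by
  rw [gg_VV, VV]
  ext1 n
  rw [PowerSeries.coeff_derivative, map_sub, PowerSeries.coeff_mul_C]
  rcases n with _ | n
  · simp [PowerSeries.coeff_one, PowerSeries.coeff_X]
  · simp [PowerSeries.coeff_one, PowerSeries.coeff_X, PowerSeries.coeff_C]

theorem map_ode {A A' : Type*} [CommRing A] [CommRing A'] (φ : A →+* A') (T : PowerSeries A) :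
    d⁄dX A' (PowerSeries.map φ T) = PowerSeries.map φ (d⁄dX A T) := by
  ext1 n
  simp [PowerSeries.coeff_derivative]

theorem RSS_ode (R ι : BB →ₐ[ℂ] A) (ε σ : ℂ)
    (hR : ∀ i, R (MvPolynomial.X i) = ι (MvPolynomial.X i) + σ • t ^ (i + 1)) :
    d⁄dX A (PowerSeries.map R.toRingHom (SS ε)) =
    (ε • PowerSeries.map ι.toRingHom xx + (ε * σ) • gg t) *
      PowerSeries.map R.toRingHom (SS ε) := by
  rw [map_ode, SS_ode, map_mul]
  congr 1
  ext1 n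
  simp only [PowerSeries.coeff_map, PowerSeries.coeff_smul, xx, gg, coeff_mk, map_add]
  simp only [AlgHom.toRingHom_eq_coe, RingHom.coe_coe, map_smul, hR, smul_add, smul_smul]

theorem CSS_ode (ι : BB →ₐ[ℂ] A) (ε : ℂ) : d⁄dX A (PowerSeries.map ι.toRingHom (SS ε)) =
    (ε • PowerSeries.map ι.toRingHom xx) *
      PowerSeries.map ι.toRingHom (SS ε) := by
  rw [map_ode, SS_ode, map_mul]
  congr 1
  ext1 n
  simp only [PowerSeries.coeff_map, PowerSeries.coeff_smul, xx, coeff_mk]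
  simp only [AlgHom.toRingHom_eq_coe, RingHom.coe_coe, map_smul]

theorem RSS_same (R ι : BB →ₐ[ℂ] A) (ε σ : ℂ)
    (hR : ∀ i, R (MvPolynomial.X i) = ι (MvPolynomial.X i) + σ • t ^ (i + 1))
    (h : ε * σ = -2) : PowerSeries.map R.toRingHom (SS ε) =
    PowerSeries.map ι.toRingHom (SS ε) * (VV t * VV t) := by
  apply ode_unique _ _ _ (RSS_ode t R ι ε σ hR)
  · rw [Derivation.leibniz, Derivation.leibniz, CSS_ode, VV_ode, h]
    simp only [smul_eq_mul, Algebra.smul_def, map_ofNat, map_neg]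
    ring
  · rw [PowerSeries.coeff_map, coeff_mul, Finset.Nat.antidiagonal_zero, Finset.sum_singleton,
      PowerSeries.coeff_map]
    simp [SS, VV, ss]

theorem RSS_opp (R ι : BB →ₐ[ℂ] A) (ε σ : ℂ)
    (hR : ∀ i, R (MvPolynomial.X i) = ι (MvPolynomial.X i) + σ • t ^ (i + 1))
    (h : ε * σ = 2) : PowerSeries.map R.toRingHom (SS ε) =
    PowerSeries.map ι.toRingHom (SS ε) * (UU t * UU t) := by
  apply ode_unique _ _ _ (RSS_ode t R ι ε σ hR)
  · rw [Derivation.leibniz, Derivation.leibniz, CSS_ode, UU_ode, h]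
    simp only [smul_eq_mul, Algebra.smul_def, map_ofNat]
    ring
  · rw [PowerSeries.coeff_map, coeff_mul, Finset.Nat.antidiagonal_zero, Finset.sum_singleton,
      PowerSeries.coeff_map]
    simp [SS, UU, ss]

theorem coeff_opp (R ι : BB →ₐ[ℂ] A) (ε σ : ℂ)
    (hR : ∀ i, R (MvPolynomial.X i) = ι (MvPolynomial.X i) + σ • t ^ (i + 1))
    (h : ε * σ = 2) (n : ℕ) : R (ss ε n) =
    ∑ q ∈ Finset.HasAntidiagonal.antidiagonal n, ι (ss ε q.1) * (((q.2 : ℂ) + 1) • t ^ q.2) := by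
  have h1 := congrArg (coeff n) (RSS_opp t R ι ε σ hR h)
  rw [PowerSeries.coeff_map, coeff_mul] at h1
  simp only [SS, coeff_mk, PowerSeries.coeff_map, AlgHom.toRingHom_eq_coe, RingHom.coe_coe] at h1
  rw [h1]
  refine Finset.sum_congr rfl fun q _ => ?_
  congr 1
  rw [coeff_mul]
  simp only [UU, coeff_mk]
  rw [Finset.sum_congr rfl (g := fun _ => t ^ q.2)]
  · simp [Algebra.smul_def]
  · intro r hr
    have := Finset.HasAntidiagonal.mem_antidiagonal.1 hr
    rw [← pow_add, this]

theorem coeff_same (R ι : BB →ₐ[ℂ] A) (ε σ : ℂ)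
    (hR : ∀ i, R (MvPolynomial.X i) = ι (MvPolynomial.X i) + σ • t ^ (i + 1))
    (h : ε * σ = -2) : R (ss ε 0) = ι (ss ε 0) ∧ R (ss ε 1) = ι (ss ε 1) - (2 : ℂ) • (ι (ss ε 0) * t) ∧
      ∀ n, R (ss ε (n + 2)) = ι (ss ε (n + 2)) - (2 : ℂ) • (ι (ss ε (n + 1)) * t)
        + ι (ss ε n) * t ^ 2 := by
  have h1 := RSS_same t R ι ε σ hR h
  have h2 : PowerSeries.map ι.toRingHom (SS ε) * (VV t * VV t) = PowerSeries.map ι.toRingHom (SS ε)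
    - PowerSeries.map ι.toRingHom (SS ε) * PowerSeries.C (2 * t) * PowerSeries.X
    + PowerSeries.map ι.toRingHom (SS ε) * PowerSeries.C (t ^ 2) * PowerSeries.X * PowerSeries.X := by
    rw [VV, map_mul, map_pow, map_ofNat]; ring
  rw [h2] at h1
  have h3 := fun n => congrArg (coeff n) h1
  refine ⟨?_, ?_, ?_⟩
  · simp [ss]
  · have := h3 (0 + 1)
    simp only [map_add, map_sub, PowerSeries.coeff_succ_mul_X,
      PowerSeries.coeff_zero_mul_X, PowerSeries.coeff_mul_C, PowerSeries.coeff_map, SS, coeff_mk] at this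
    simp only [AlgHom.toRingHom_eq_coe, RingHom.coe_coe, Nat.zero_add] at this
    rw [this, Algebra.smul_def, map_ofNat]; ring
  · intro n
    have := h3 (n + 1 + 1)
    simp only [map_add, map_sub, PowerSeries.coeff_succ_mul_X,
      PowerSeries.coeff_zero_mul_X, PowerSeries.coeff_mul_C, PowerSeries.coeff_map, SS, coeff_mk] at this
    simp only [AlgHom.toRingHom_eq_coe, RingHom.coe_coe] at this
    rw [show n + 2 = n + 1 + 1 from rfl, this, Algebra.smul_def, map_ofNat]; ring
end

theorem SS_inv (ε : ℂ) : SS ε * SS (-ε) = 1 := by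
  apply ode_unique (A := BB) 0
  · rw [Derivation.leibniz, SS_ode, SS_ode]
    simp only [smul_eq_mul, Algebra.smul_def, map_neg]
    ring
  · simp
  · simp [SS, ss]

theorem SS_log : d⁄dX BB (SS 1) * SS (-1) = xx := by
  rw [SS_ode, mul_assoc, SS_inv, one_smul, mul_one]

end FF

namespace FF

noncomputable def sZ (ε : ℂ) (k : ℤ) : BB := if 0 ≤ k then ss ε k.toNat else 0

theorem sZ_nat (ε : ℂ) (n : ℕ) : sZ ε (n : ℤ) = ss ε n := by simp [sZ]
theorem sZ_neg (ε : ℂ) (k : ℤ) (h : k < 0) : sZ ε k = 0 := by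
  rw [sZ, if_neg (by omega)]

noncomputable def LL (ε : ℂ) (k : ℤ) : PB →ₗ[BB] BB :=
  Polynomial.lsum (fun j => LinearMap.toSpanSingleton BB BB (sZ ε (k + (j : ℤ))))

theorem LL_mono (ε : ℂ) (k : ℤ) (a : BB) (j : ℕ) :
    LL ε k (Polynomial.C a * Polynomial.X ^ j) = a * sZ ε (k + j) := by
  rw [Polynomial.C_mul_X_pow_eq_monomial, LL, Polynomial.lsum_apply, Polynomial.sum_monomial_index]
  · simp
  · simp

theorem LL_C (ε : ℂ) (k : ℤ) (a : BB) : LL ε k (Polynomial.C a) = a * sZ ε k := by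
  simpa using LL_mono ε k a 0

theorem LL_smul (ε : ℂ) (k : ℤ) (a : ℂ) (P : PB) : LL ε k (a • P) = a • LL ε k P :=
  ((LL ε k).restrictScalars ℂ).map_smul a P

theorem LL_X (ε : ℂ) (k : ℤ) (i : ℕ) (P : PB) :
    LL ε k (Polynomial.X ^ (i + 1) * P) = LL ε (k + i + 1) P := by
  induction P using Polynomial.induction_on' with
  | add p q hp hq => rw [mul_add, map_add, map_add, hp, hq]
  | monomial n a =>
    rw [← Polynomial.C_mul_X_pow_eq_monomial, LL_mono, mul_left_comm, ← pow_add, LL_mono]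
    congr 2; push_cast; ring

noncomputable def Ga (ε : ℂ) (k : ℤ) : BB →ₗ[ℂ] BB :=
  ((LL ε k).restrictScalars ℂ).comp (RR (-2 * ε)).toLinearMap

theorem Ga_apply (ε : ℂ) (k : ℤ) (P : BB) : Ga ε k P = LL ε k (RR (-2 * ε) P) := rfl

theorem Ga_one (ε : ℂ) (k : ℤ) : Ga ε k 1 = sZ ε k := by
  rw [Ga_apply, map_one, ← Polynomial.C_1, LL_C, one_mul]

theorem Ga_X (ε : ℂ) (k : ℤ) (i : ℕ) (P : BB) : Ga ε k (MvPolynomial.X i * P) =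
    MvPolynomial.X i * Ga ε k P + (-2 * ε) • Ga ε (k + i + 1) P := by
  simp only [Ga_apply]
  rw [map_mul, RR_X, add_mul, map_add, smul_mul_assoc, LL_smul, LL_X, ← Polynomial.smul_eq_C_mul,
    map_smul, smul_eq_mul]

theorem RR_C (ε : ℂ) (i : ℕ) : RR ε (MvPolynomial.X i) =
    (Polynomial.CAlgHom (R := ℂ) (A := BB)) (MvPolynomial.X i) + ε • (Polynomial.X : PB) ^ (i + 1) :=
  RR_X ε i

theorem Ga_same (ε : ℂ) (h : ε * ε = 1) (k l : ℤ) : Ga ε k (sZ ε l) =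
    sZ ε l * sZ ε k - (2 : ℂ) • (sZ ε (l - 1) * sZ ε (k + 1)) + sZ ε (l - 2) * sZ ε (k + 2) := by
  obtain ⟨h0, h1, h2⟩ := coeff_same (Polynomial.X : PB) (RR (-2 * ε)) Polynomial.CAlgHom ε (-2 * ε)
    (RR_C _) (by linear_combination (-2) * h)
  simp only [Polynomial.CAlgHom_apply] at h0 h1 h2
  rcases lt_or_ge l 0 with hl | hl
  · simp [sZ_neg ε l hl, sZ_neg ε (l - 1) (by omega), sZ_neg ε (l - 2) (by omega)]
  · obtain ⟨n, rfl⟩ := Int.eq_ofNat_of_zero_le hl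
    rcases n with _ | _ | n
    · rw [sZ_nat, Ga_apply, h0, sZ_neg ε (_ - 1) (by omega), sZ_neg ε (_ - 2) (by omega), LL_C]
      simp
    · rw [sZ_nat, Ga_apply, h1, sZ_neg ε (_ - 2) (by omega), map_sub, LL_smul, LL_C]
      have := LL_mono ε k (ss ε 0) 1
      rw [pow_one] at this
      rw [Nat.zero_add, this, show ((1 : ℕ) : ℤ) - 1 = ((0 : ℕ) : ℤ) by norm_num, sZ_nat]
      simp
    · rw [sZ_nat, Ga_apply, h2, map_add, map_sub, LL_smul, LL_C, LL_mono]
      have := LL_mono ε k (ss ε (n + 1)) 1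
      rw [pow_one] at this
      rw [this, show ((n + 1 + 1 : ℕ) : ℤ) - 1 = ((n + 1 : ℕ) : ℤ) by push_cast; ring,
        show ((n + 1 + 1 : ℕ) : ℤ) - 2 = ((n : ℕ) : ℤ) by push_cast; ring, sZ_nat, sZ_nat]
      simp

theorem Ga_ee (ε : ℂ) (h : ε * ε = 1) (P : BB) : ∀ k l : ℤ,
    Ga ε (k - 2) (Ga ε l P) = Ga ε (l - 2) (Ga ε k P) := by
  induction P using MvPolynomial.induction_on with
  | C a =>
    intro k l
    have hC : (MvPolynomial.C a : BB) = a • 1 := by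
      rw [MvPolynomial.smul_eq_C_mul, mul_one]
    rw [hC, map_smul, map_smul, map_smul, map_smul, Ga_one, Ga_one, Ga_same ε h, Ga_same ε h]
    rw [show k - 2 + 1 = k - 1 by ring, show k - 2 + 2 = k by ring, show l - 2 + 1 = l - 1 by ring,
      show l - 2 + 2 = l by ring]
    congr 1
    rw [mul_comm (sZ ε (l - 1))]; ring
  | add p q hp hq => intro k l; simp only [map_add, hp, hq]
  | mul_X p i hp =>
    intro k l
    rw [mul_comm]
    simp only [Ga_X, map_add, map_smul]
    rw [hp k l, hp k (l + i + 1), show k - 2 + i + 1 = (k + i + 1) - 2 by ring, hp (k + i + 1) l,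
      show l - 2 + i + 1 = (l + i + 1) - 2 by ring]
    module

open Finset in
theorem Ga_opp (ε : ℂ) (h : ε * ε = 1) (M : ℕ) (l : ℤ) : Ga ε (M - l) (sZ (-ε) l) =
    ∑ q ∈ HasAntidiagonal.antidiagonal M, ((l + 1 - q.1).toNat : ℂ) • (ss (-ε) q.1 * ss ε q.2) := by
  rcases lt_or_ge l 0 with hl | hl
  · rw [sZ_neg _ l hl, map_zero]
    symm
    apply Finset.sum_eq_zero
    intro q _
    rw [show (l + 1 - (q.1 : ℤ)).toNat = 0 by omega]; simp
  · obtain ⟨n, rfl⟩ := Int.eq_ofNat_of_zero_le hl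
    have h1 := coeff_opp (Polynomial.X : PB) (RR (-2 * ε)) Polynomial.CAlgHom (-ε) (-2 * ε)
      (RR_C _) (by linear_combination (2) * h) n
    rw [sZ_nat, Ga_apply, h1, map_sum]
    simp only [Polynomial.CAlgHom_apply, mul_smul_comm, LL_smul, LL_mono]
    rw [Finset.Nat.sum_antidiagonal_eq_sum_range_succ_mk, Finset.Nat.sum_antidiagonal_eq_sum_range_succ_mk]
    simp only
    have e1 : ∑ x ∈ range n.succ, (((n - x : ℕ) : ℂ) + 1) •
        (ss (-ε) x * sZ ε ((M : ℤ) - n + (n - x : ℕ))) =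
        ∑ x ∈ range (n + 1 + M), (((n : ℤ) + 1 - x).toNat : ℂ) • (ss (-ε) x * sZ ε ((M : ℤ) - x)) := by
      have : range n.succ ⊆ range (n + 1 + M) := by
        intro x hx; rw [mem_range] at *; omega
      rw [← Finset.sum_subset this]
      · refine Finset.sum_congr rfl fun x hx => ?_
        rw [mem_range] at hx
        rw [show ((n : ℤ) + 1 - x).toNat = n - x + 1 by omega,
          show (M : ℤ) - n + (n - x : ℕ) = M - x by omega]
        push_cast
        rfl
      · intro x _ hx
        rw [mem_range] at hx
        rw [show ((n : ℤ) + 1 - x).toNat = 0 by omega]; simp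
    have e2 : ∑ x ∈ range M.succ, (((n : ℤ) + 1 - x).toNat : ℂ) • (ss (-ε) x * ss ε (M - x)) =
        ∑ x ∈ range (n + 1 + M), (((n : ℤ) + 1 - x).toNat : ℂ) • (ss (-ε) x * sZ ε ((M : ℤ) - x)) := by
      have : range M.succ ⊆ range (n + 1 + M) := by
        intro x hx; rw [mem_range] at *; omega
      rw [← Finset.sum_subset this]
      · refine Finset.sum_congr rfl fun x hx => ?_
        rw [mem_range] at hx
        rw [show (M : ℤ) - x = ((M - x : ℕ) : ℤ) by omega, sZ_nat]
      · intro x _ hx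
        rw [mem_range] at hx
        rw [sZ_neg ε _ (by omega)]; simp
    rw [e1, e2]

open Finset in
theorem Ga_ef_one (m : ℕ) (k l : ℤ) (hkl : k + l = m) :
    Ga 1 (k + 1) (sZ (-1) l) = Ga (-1) (l + 2) (sZ 1 (k - 1)) + MvPolynomial.X m := by
  have h1 := Ga_opp 1 (by norm_num) (m + 1) l
  have h2 := Ga_opp (-1) (by norm_num) (m + 1) (k - 1)
  rw [neg_neg] at h2
  rw [show ((m + 1 : ℕ) : ℤ) - l = k + 1 by push_cast; omega] at h1
  rw [show ((m + 1 : ℕ) : ℤ) - (k - 1) = l + 2 by push_cast; omega] at h2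
  rw [h1, h2, ← Finset.Nat.sum_antidiagonal_swap]
  have h3 := congrArg (PowerSeries.coeff m) SS_log
  have h4 := congrArg (PowerSeries.coeff (m + 1)) (SS_inv 1)
  rw [PowerSeries.coeff_mul] at h3 h4
  simp only [PowerSeries.coeff_derivative, SS, xx, PowerSeries.coeff_mk] at h3 h4
  rw [PowerSeries.coeff_one, if_neg (by omega)] at h4
  have h5 : ∑ q ∈ HasAntidiagonal.antidiagonal (m + 1), (q.1 : ℂ) • (ss 1 q.1 * ss (-1) q.2) =
      MvPolynomial.X m := by
    rw [Finset.Nat.sum_antidiagonal_succ, ← h3]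
    simp only [Nat.cast_zero, zero_smul, zero_add]
    refine Finset.sum_congr rfl fun q _ => ?_
    rw [Algebra.smul_def]
    simp
    ring
  have h6 : MvPolynomial.X m = ∑ q ∈ HasAntidiagonal.antidiagonal (m + 1),
      ((q.1 : ℂ) - (k : ℂ)) • (ss 1 q.1 * ss (-1) q.2) := by
    simp only [sub_smul]
    rw [Finset.sum_sub_distrib, h5, ← Finset.smul_sum, h4, smul_zero, sub_zero]
  rw [h6, ← Finset.sum_add_distrib]
  refine Finset.sum_congr rfl fun q hq => ?_
  have hq' := HasAntidiagonal.mem_antidiagonal.1 hq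
  simp only [Prod.fst_swap, Prod.snd_swap]
  rw [mul_comm (ss (-1) q.2), ← add_smul]
  congr 1
  have : ((l + 1 - (q.2 : ℤ)).toNat : ℤ) = ((k - 1 + 1 - (q.1 : ℤ)).toNat : ℤ) + (q.1 - k) := by
    omega
  exact_mod_cast this

theorem Ga_ef (P : BB) : ∀ (m : ℕ) (k l : ℤ), k + l = m →
    Ga 1 (k + 1) (Ga (-1) l P) = Ga (-1) (l + 2) (Ga 1 (k - 1) P) + MvPolynomial.X m * P := by
  induction P using MvPolynomial.induction_on with
  | C a =>
    intro m k l hkl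
    have hC : (MvPolynomial.C a : BB) = a • 1 := by
      rw [MvPolynomial.smul_eq_C_mul, mul_one]
    rw [hC, map_smul, map_smul, map_smul, map_smul, Ga_one, Ga_one, Ga_ef_one m k l hkl]
    rw [smul_add, mul_smul_comm, mul_one]
  | add p q hp hq =>
    intro m k l hkl; simp only [map_add, hp m k l hkl, hq m k l hkl, mul_add]; abel
  | mul_X p i hp =>
    intro m k l hkl
    rw [mul_comm p]
    simp only [Ga_X, map_add, map_smul]
    have h1 := hp (m + i + 1) (k + i + 1) l (by push_cast; omega)
    have h2 := hp (m + i + 1) k (l + i + 1) (by push_cast; omega)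
    rw [hp m k l hkl, show k + 1 + i + 1 = (k + i + 1) + 1 by ring, h1, h2,
      show l + i + 1 + 2 = l + 2 + i + 1 by ring, show k + i + 1 - 1 = k - 1 + i + 1 by ring,
      mul_add, mul_left_comm (MvPolynomial.X m)]
    module
end FF

namespace FF

abbrev Fock := ℤ →₀ BB

noncomputable def Fe (n : ℕ) : Module.End ℂ Fock :=
  Finsupp.lsum ℂ (fun c : ℤ => (Finsupp.lsingle (c + 1)).comp (Ga 1 (n - 2 * c - 1)))
noncomputable def Ff (n : ℕ) : Module.End ℂ Fock :=
  Finsupp.lsum ℂ (fun c : ℤ => (Finsupp.lsingle (c - 1)).comp (Ga (-1) (n + 2 * c)))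
noncomputable def Fh (n : ℕ) : Module.End ℂ Fock :=
  Finsupp.lsum ℂ (fun c : ℤ => (Finsupp.lsingle c).comp (LinearMap.mulLeft ℂ (MvPolynomial.X n : BB)))

theorem Fe_single (n : ℕ) (c : ℤ) (P : BB) :
    Fe n (Finsupp.single c P) = Finsupp.single (c + 1) (Ga 1 (n - 2 * c - 1) P) := by
  simp [Fe]
theorem Ff_single (n : ℕ) (c : ℤ) (P : BB) :
    Ff n (Finsupp.single c P) = Finsupp.single (c - 1) (Ga (-1) (n + 2 * c) P) := by
  simp [Ff]
theorem Fh_single (n : ℕ) (c : ℤ) (P : BB) :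
    Fh n (Finsupp.single c P) = Finsupp.single c (MvPolynomial.X n * P) := by
  simp [Fh]


theorem Ga_X1 (k : ℤ) (i : ℕ) (P : BB) : MvPolynomial.X i * Ga 1 k P =
    Ga 1 k (MvPolynomial.X i * P) + (2 : ℂ) • Ga 1 (k + i + 1) P := by
  rw [Ga_X, mul_one, neg_smul, neg_add_cancel_right]

theorem Ga_X2 (k : ℤ) (i : ℕ) (P : BB) : MvPolynomial.X i * Ga (-1) k P =
    Ga (-1) k (MvPolynomial.X i * P) - (2 : ℂ) • Ga (-1) (k + i + 1) P := by
  rw [Ga_X, neg_mul_neg, mul_one, add_sub_cancel_right]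

theorem F_ee (m n : ℕ) (u : Fock) : Fe m (Fe n u) = Fe n (Fe m u) := by
  induction u using Finsupp.induction_linear with
  | zero => simp
  | add a b ha hb => rw [map_add, map_add, map_add, map_add, ha, hb]
  | single c P =>
    rw [Fe_single, Fe_single, Fe_single, Fe_single]
    have := Ga_ee 1 (by norm_num) P (m - 2 * c - 1) (n - 2 * c - 1)
    have e1 : ∀ m : ℕ, (m : ℤ) - 2 * (c + 1) - 1 = m - 2 * c - 1 - 2 := fun m => by ring
    rw [e1, e1, this]

theorem F_ff (m n : ℕ) (u : Fock) : Ff m (Ff n u) = Ff n (Ff m u) := by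
  induction u using Finsupp.induction_linear with
  | zero => simp
  | add a b ha hb => rw [map_add, map_add, map_add, map_add, ha, hb]
  | single c P =>
    rw [Ff_single, Ff_single, Ff_single, Ff_single]
    have := Ga_ee (-1) (by norm_num) P (m + 2 * c) (n + 2 * c)
    have e1 : ∀ m : ℕ, (m : ℤ) + 2 * (c - 1) = m + 2 * c - 2 := fun m => by ring
    rw [e1, e1, this]

theorem F_hh (m n : ℕ) (u : Fock) : Fh m (Fh n u) = Fh n (Fh m u) := by
  induction u using Finsupp.induction_linear with
  | zero => simp
  | add a b ha hb => rw [map_add, map_add, map_add, map_add, ha, hb]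
  | single c P => simp only [Fh_single, mul_left_comm]

theorem F_ef (m n : ℕ) (u : Fock) : Fe m (Ff n u) = Ff n (Fe m u) + Fh (m + n) u := by
  induction u using Finsupp.induction_linear with
  | zero => simp
  | add a b ha hb =>
    rw [map_add, map_add, map_add, map_add, map_add, ha, hb, add_add_add_comm]
  | single c P =>
    rw [Fe_single, Ff_single, Ff_single, Fe_single, Fh_single]
    have := Ga_ef P (m + n) (m - 2 * c) (n + 2 * c) (by push_cast; ring)
    rw [show (m : ℤ) - 2 * (c - 1) - 1 = m - 2 * c + 1 by ring, this,
      show c - 1 + 1 = c by ring, show c + 1 - 1 = c by ring, Finsupp.single_add,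
      show (n : ℤ) + 2 * (c + 1) = n + 2 * c + 2 by ring]

theorem F_he (m n : ℕ) (u : Fock) :
    Fh m (Fe n u) = Fe n (Fh m u) + (2 : ℂ) • Fe (m + n + 1) u := by
  induction u using Finsupp.induction_linear with
  | zero => simp
  | add a b ha hb =>
    rw [map_add, map_add, map_add, map_add, map_add, ha, hb, add_add_add_comm, smul_add]
  | single c P =>
    rw [Fe_single, Fh_single, Fh_single, Fe_single, Fe_single, Ga_X1, Finsupp.single_add,
      Finsupp.smul_single, show ((m + n + 1 : ℕ) : ℤ) - 2 * c - 1 = n - 2 * c - 1 + m + 1 by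
        push_cast; ring]

theorem F_hf (m n : ℕ) (u : Fock) :
    Fh m (Ff n u) = Ff n (Fh m u) - (2 : ℂ) • Ff (m + n + 1) u := by
  induction u using Finsupp.induction_linear with
  | zero => simp
  | add a b ha hb =>
    rw [map_add, map_add, map_add, map_add, map_add, ha, hb, smul_add, add_sub_add_comm]
  | single c P =>
    rw [Ff_single, Fh_single, Fh_single, Ff_single, Ff_single, Ga_X2, Finsupp.single_sub,
      Finsupp.smul_single, show ((m + n + 1 : ℕ) : ℤ) + 2 * c = n + 2 * c + m + 1 by
        push_cast; ring]

noncomputable def FR : LoopRep Fock where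
  e := Fe
  f := Ff
  h := Fh
  ee := F_ee
  ff := F_ff
  hh := F_hh
  ef := F_ef
  he := F_he
  hf := F_hf

noncomputable def vac : Fock := Finsupp.single 0 1

theorem vac_isVac : FR.IsVac vac where
  e0 := by
    change Fe 0 (Finsupp.single 0 1) = 0
    rw [Fe_single, Ga_one, sZ_neg _ _ (by norm_num), Finsupp.single_zero]
  f00 := by
    change Ff 0 (Ff 0 (Finsupp.single 0 1)) = 0
    rw [Ff_single, Ga_one, show ((0 : ℕ) : ℤ) + 2 * 0 = ((0 : ℕ) : ℤ) by norm_num, sZ_nat, ss,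
      Ff_single, Ga_one, sZ_neg _ _ (by norm_num), Finsupp.single_zero]

theorem vv_vac (c : ℤ) : FR.vv vac c = Finsupp.single c 1 := by
  have h1 : ∀ r : ℕ, Chain.vec (fun n => FR.e (n + 1)) vac r = Finsupp.single (r : ℤ) 1 := by
    intro r
    induction r with
    | zero => rfl
    | succ r ih =>
      rw [Chain.vec, ih]
      change Fe _ _ = _
      rw [Fe_single, Ga_one, show ((2 * r + 1 : ℕ) : ℤ) - 2 * r - 1 = ((0 : ℕ) : ℤ) by push_cast; ring,
        sZ_nat, ss]
      rfl
  have h2 : ∀ r : ℕ, Chain.vec FR.f vac r = Finsupp.single (-(r : ℤ)) 1 := by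
    intro r
    induction r with
    | zero => rfl
    | succ r ih =>
      rw [Chain.vec, ih]
      change Ff _ _ = _
      rw [Ff_single, Ga_one, show ((2 * r : ℕ) : ℤ) + 2 * -r = ((0 : ℕ) : ℤ) by push_cast; ring,
        sZ_nat, ss]
      congr 1; push_cast; ring
  rcases c with r | r
  · exact h1 r
  · exact h2 (r + 1)

theorem hl_vac (l : List ℕ) (c : ℤ) (P : BB) : hl FR.h l (Finsupp.single c P) =
    Finsupp.single c ((l.map MvPolynomial.X).prod * P) := by
  induction l with
  | nil => simp [hl]
  | cons i l ih =>
    rw [hl, ih]; change Fh _ _ = _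
    rw [Fh_single, List.map_cons, List.prod_cons, mul_assoc]

theorem hl_indep (c : ℤ) : LinearIndependent ℂ
    (fun s : Multiset ℕ => hl FR.h s.toList (FR.vv vac c)) := by
  have h1 : LinearIndependent ℂ (fun s : Multiset ℕ =>
      (MvPolynomial.monomial (R := ℂ) (Multiset.toFinsupp s) 1)) := by
    have := (MvPolynomial.basisMonomials ℕ ℂ).linearIndependent.comp (Multiset.toFinsupp (α := ℕ))
      Multiset.toFinsupp.injective
    simpa [Function.comp_def] using this
  have h2 : (fun s : Multiset ℕ => hl FR.h s.toList (FR.vv vac c)) =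
      (Finsupp.lsingle c : BB →ₗ[ℂ] Fock) ∘ (fun s : Multiset ℕ =>
      (MvPolynomial.monomial (R := ℂ) (Multiset.toFinsupp s) 1)) := by
    funext s
    rw [vv_vac, hl_vac, mul_one]
    simp only [Function.comp, Finsupp.lsingle_apply]
    congr 1
    rw [← Multiset.prod_coe, ← Multiset.map_coe, Multiset.coe_toList]
    induction s using Multiset.induction_on with
    | empty => simp
    | cons a s ih =>
      rw [Multiset.map_cons, Multiset.prod_cons, ih, ← Multiset.singleton_add, map_add,
        ← one_mul (1 : ℂ), ← MvPolynomial.monomial_mul, Multiset.toFinsupp_singleton]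
      simp [MvPolynomial.X]
  rw [h2]
  exact h1.map' _ (LinearMap.ker_eq_bot.2 (Finsupp.single_injective c))

end FF

namespace FF
open LieAlgebra
attribute [local instance 100] LieRing.ofAssociativeRing

structure Chev {ℓ : ℕ} (A : Matrix (Fin ℓ) (Fin ℓ) ℤ) (L : Type*) [LieRing L] [LieAlgebra ℂ L] where
  e : Fin ℓ → L
  f : Fin ℓ → L
  h : Fin ℓ → L
  hh : ∀ i j, ⁅h i, h j⁆ = 0
  ef : ∀ i j, ⁅e i, f j⁆ = if i = j then h i else 0
  he : ∀ i j, ⁅h i, e j⁆ = (A i j : ℂ) • e j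
  hf : ∀ i j, ⁅h i, f j⁆ = -((A i j : ℂ) • f j)

namespace Chev
variable {ℓ : ℕ} {A : Matrix (Fin ℓ) (Fin ℓ) ℤ} {L : Type*} [LieRing L] [LieAlgebra ℂ L]

def swap (c : Chev A L) : Chev A L where
  e := c.f
  f := c.e
  h := fun i => - c.h i
  hh i j := by simp [c.hh]
  ef i j := by
    rw [← lie_skew, c.ef]
    by_cases h : i = j
    · subst h; simp
    · simp [h, Ne.symm h]
  he i j := by rw [neg_lie, c.hf, neg_neg]
  hf i j := by rw [neg_lie, c.he]

/-- Serre element -/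
noncomputable def th (c : Chev A L) (i j : Fin ℓ) (n : ℕ) : L := ((ad ℂ L (c.e i)) ^ n) (c.e j)

theorem th_zero (c : Chev A L) (i j : Fin ℓ) : c.th i j 0 = c.e j := rfl
theorem th_succ (c : Chev A L) (i j : Fin ℓ) (n : ℕ) : c.th i j (n + 1) = ⁅c.e i, c.th i j n⁆ := by
  rw [th, pow_succ']; rfl

theorem h_th (c : Chev A L) (k i j : Fin ℓ) (n : ℕ) :
    ⁅c.h k, c.th i j n⁆ = ((n : ℂ) * A k i + A k j) • c.th i j n := by
  induction n with
  | zero => rw [th_zero, c.he]; simp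
  | succ n ih =>
    rw [th_succ, leibniz_lie, c.he, ih, lie_smul, smul_lie, ← add_smul]
    congr 1; push_cast; ring

theorem f_th_same (c : Chev A L) (hA : A i i = 2) (hij : i ≠ j) (n : ℕ) :
    ⁅c.f i, c.th i j (n + 1)⁆ = (-(((n : ℂ) + 1) * (A i j + n))) • c.th i j n := by
  have fe : ∀ i j, ⁅c.f i, c.e j⁆ = if i = j then - c.h i else 0 := c.swap.ef
  induction n with
  | zero =>
    rw [th_succ, th_zero, leibniz_lie, fe, fe, if_pos rfl, if_neg hij, lie_zero, neg_lie, c.he]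
    simp
  | succ n ih =>
    rw [th_succ, leibniz_lie, fe, if_pos rfl, ih, neg_lie, h_th, lie_smul, ← th_succ, hA]
    push_cast
    module

theorem f_th (c : Chev A L) (hA : ∀ i, A i i = 2) (hA' : ∀ i j, i ≠ j → A i j ≤ 0)
    (hA0 : ∀ i j, A i j = 0 → A j i = 0) (i j k : Fin ℓ) (hij : i ≠ j) :
    ⁅c.f k, c.th i j (1 - A i j).toNat⁆ = 0 := by
  have fe : ∀ i j, ⁅c.f i, c.e j⁆ = if i = j then - c.h i else 0 := c.swap.ef
  have hn := hA' i j hij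
  by_cases hk : k = i
  · subst hk
    obtain ⟨n, hn'⟩ : ∃ n : ℕ, (1 - A k j).toNat = n + 1 := ⟨(-A k j).toNat, by omega⟩
    rw [hn', c.f_th_same (hA k) hij]
    have : A k j + n = 0 := by omega
    have h2 : (A k j : ℂ) + n = 0 := by exact_mod_cast this
    rw [h2]; simp
  · have comm : ∀ n, ⁅c.f k, c.th i j (n + 1)⁆ = ⁅c.e i, ⁅c.f k, c.th i j n⁆⁆ := by
      intro n
      rw [th_succ, leibniz_lie, fe, if_neg hk, zero_lie, zero_add]
    by_cases hkj : k = j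
    · subst hkj
      have h1 : ⁅c.f k, c.th i k 1⁆ = (A k i : ℂ) • c.e i := by
        rw [comm, th_zero, fe, if_pos rfl, lie_neg, ← lie_skew, c.he, neg_neg]
      have h2 : ∀ n, ⁅c.f k, c.th i k (n + 2)⁆ = 0 := by
        intro n
        induction n with
        | zero => rw [comm, h1, lie_smul, lie_self, smul_zero]
        | succ n ih => rw [show n + 1 + 2 = n + 2 + 1 from rfl, comm, ih, lie_zero]
      by_cases h0 : A i k = 0
      · rw [h0, show (1 - (0 : ℤ)).toNat = 1 from rfl, h1, hA0 _ _ h0]; simp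
      · obtain ⟨n, hn'⟩ : ∃ n : ℕ, (1 - A i k).toNat = n + 2 := ⟨(-A i k - 1).toNat, by omega⟩
        rw [hn', h2]
    · have : ∀ n, ⁅c.f k, c.th i j n⁆ = 0 := by
        intro n
        induction n with
        | zero => rw [th_zero, fe, if_neg hkj]
        | succ n ih => rw [comm, ih, lie_zero]
      exact this _
end Chev

theorem lie_end_apply {M : Type*} [AddCommGroup M] [Module ℂ M] (a b : Module.End ℂ M) (u : M) :
    ⁅a, b⁆ u = a (b u) - b (a u) := rfl

section T
variable {ℓ : ℕ} (A : Matrix (Fin ℓ) (Fin ℓ) ℤ)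

abbrev TT (ℓ : ℕ) := List (Fin ℓ) →₀ ℂ

noncomputable def TE (i : Fin ℓ) : Module.End ℂ (TT ℓ) :=
  Finsupp.linearCombination ℂ (fun w => Finsupp.single (i :: w) (1 : ℂ))

noncomputable def wt (k : Fin ℓ) (w : List (Fin ℓ)) : ℂ := (w.map (fun j => (A k j : ℂ))).sum

noncomputable def TH (k : Fin ℓ) : Module.End ℂ (TT ℓ) :=
  Finsupp.linearCombination ℂ (fun w => wt A k w • Finsupp.single w (1 : ℂ))

noncomputable def Fw (k : Fin ℓ) : List (Fin ℓ) → TT ℓ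
  | [] => 0
  | j :: w => TE j (Fw k w) - if j = k then wt A k w • Finsupp.single w (1 : ℂ) else 0

noncomputable def TF (k : Fin ℓ) : Module.End ℂ (TT ℓ) := Finsupp.linearCombination ℂ (Fw A k)

theorem TE_single (i : Fin ℓ) (w) : TE i (Finsupp.single w 1) = Finsupp.single (i :: w) 1 := by
  simp [TE]
theorem TH_single (i : Fin ℓ) (w) : TH A i (Finsupp.single w 1) = wt A i w • Finsupp.single w 1 := by
  simp [TH]
theorem TF_single (i : Fin ℓ) (w) : TF A i (Finsupp.single w 1) = Fw A i w := by
  simp [TF]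

theorem TT_ext {M : Type*} [AddCommGroup M] [Module ℂ M] {a b : TT ℓ →ₗ[ℂ] M} (h : ∀ w, a (Finsupp.single w 1) = b (Finsupp.single w 1)) :
    a = b := by
  apply Finsupp.lhom_ext'
  intro w
  apply LinearMap.ext_ring
  exact h w

theorem T_he (k i : Fin ℓ) : ⁅TH A k, TE i⁆ = (A k i : ℂ) • TE i := by
  apply TT_ext; intro w
  rw [lie_end_apply, TE_single, TH_single,
    TH_single, map_smul, LinearMap.smul_apply, TE_single, ← sub_smul]
  congr 1
  simp [wt]

theorem T_he_apply (k i : Fin ℓ) (u : TT ℓ) : TH A k (TE i u) = TE i (TH A k u) + (A k i : ℂ) • TE i u := by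
  have := LinearMap.congr_fun (T_he A k i) u
  rw [lie_end_apply,
    LinearMap.smul_apply] at this
  rw [← this]; abel

theorem TH_Fw (k j : Fin ℓ) (w : List (Fin ℓ)) : TH A k (Fw A j w) = (wt A k w - A k j) • Fw A j w := by
  induction w with
  | nil => simp [Fw]
  | cons i w ih =>
    have hw : wt A k (i :: w) = A k i + wt A k w := by simp [wt]
    rw [Fw, map_sub, T_he_apply, ih, hw, map_smul]
    by_cases h : i = j
    · subst h
      rw [if_pos rfl, map_smul, TH_single]
      module
    · rw [if_neg h, map_zero]
      module

noncomputable def TChev : Chev A (Module.End ℂ (TT ℓ)) where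
  e := TE
  f := TF A
  h := TH A
  hh i j := by
    apply TT_ext; intro w
    rw [lie_end_apply]
    simp only [TH_single, map_smul, LinearMap.zero_apply]
    module
  ef i j := by
    apply TT_ext; intro w
    rw [lie_end_apply, TE_single,
      TF_single, TF_single, Fw]
    by_cases h : i = j
    · subst h
      rw [if_pos rfl, if_pos rfl, TH_single]; abel
    · rw [if_neg h, if_neg h]; simp
  he := T_he A
  hf i j := by
    apply TT_ext; intro w
    rw [lie_end_apply, LinearMap.neg_apply,
      LinearMap.smul_apply]
    simp only [TH_single, TF_single, map_smul, TH_Fw]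
    module

structure GCM : Prop where
  diag : ∀ i, A i i = 2
  off : ∀ i j, i ≠ j → A i j ≤ 0
  zero : ∀ i j, A i j = 0 → A j i = 0

variable {A}
noncomputable def thT (A : Matrix (Fin ℓ) (Fin ℓ) ℤ) (i j : Fin ℓ) : Module.End ℂ (TT ℓ) :=
  (TChev A).th i j (1 - A i j).toNat

/-- f-Serre relations hold on T -/
theorem T_fSerre (hA : GCM A) (i j : Fin ℓ) (hij : i ≠ j) :
    (TChev A).swap.th i j (1 - A i j).toNat = 0 := by
  have h1 : ∀ k, ⁅(TE k : Module.End ℂ (TT ℓ)), (TChev A).swap.th i j (1 - A i j).toNat⁆ = 0 := fun k =>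
    (TChev A).swap.f_th hA.diag hA.off hA.zero i j k hij
  have h0 : ∀ n, (TChev A).swap.th i j n (Finsupp.single [] 1) = 0 := by
    have hf : ∀ k, TF A k (Finsupp.single [] 1) = 0 := fun k => by rw [TF_single]; rfl
    intro n
    induction n with
    | zero => exact hf j
    | succ n ih =>
      rw [Chev.th_succ, lie_end_apply, ih]
      have : (TChev A).swap.e i (Finsupp.single [] 1) = 0 := hf i
      rw [this]; simp
  apply TT_ext; intro w
  induction w with
  | nil => rw [h0]; rfl
  | cons k w ih =>
    have := LinearMap.congr_fun (h1 k) (Finsupp.single w 1)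
    rw [lie_end_apply, ih, TE_single] at this
    simpa using this

/-- word operators -/
noncomputable def wE : List (Fin ℓ) → TT ℓ → TT ℓ
  | [], u => u
  | i :: w, u => TE i (wE w u)

noncomputable def II (A : Matrix (Fin ℓ) (Fin ℓ) ℤ) : Submodule ℂ (TT ℓ) :=
  Submodule.span ℂ {x | ∃ w i j u, i ≠ j ∧ x = wE w (thT A i j u)}

theorem II_E (k : Fin ℓ) (x : TT ℓ) (hx : x ∈ II A) : TE k x ∈ II A := by
  have : II A ≤ (II A).comap (TE k) := by
    conv_lhs => rw [II]
    rw [Submodule.span_le]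
    rintro _ ⟨w, i, j, u, hij, rfl⟩
    exact Submodule.subset_span ⟨k :: w, i, j, u, hij, rfl⟩
  exact this hx

theorem II_th (i j : Fin ℓ) (hij : i ≠ j) (u : TT ℓ) : thT A i j u ∈ II A :=
  Submodule.subset_span ⟨[], i, j, u, hij, rfl⟩

theorem II_H (k : Fin ℓ) (x : TT ℓ) (hx : x ∈ II A) : TH A k x ∈ II A := by
  have : II A ≤ (II A).comap (TH A k) := by
    conv_lhs => rw [II]
    rw [Submodule.span_le]
    rintro _ ⟨w, i, j, u, hij, rfl⟩
    change TH A k (wE w _) ∈ II A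
    induction w with
    | nil =>
      have := LinearMap.congr_fun ((TChev A).h_th k i j (1 - A i j).toNat) u
      rw [lie_end_apply, sub_eq_iff_eq_add] at this
      change TH A k (thT A i j u) = _ at this
      rw [wE, this]
      exact Submodule.add_mem _ (Submodule.smul_mem _ _ (II_th i j hij _)) (II_th i j hij _)
    | cons l w ih =>
      rw [wE, T_he_apply]
      exact Submodule.add_mem _ (II_E _ _ ih) (Submodule.smul_mem _ _ (II_E _ _
        (Submodule.subset_span ⟨w, i, j, u, hij, rfl⟩)))
  exact this hx

theorem II_F (hA : GCM A) (k : Fin ℓ) (x : TT ℓ) (hx : x ∈ II A) : TF A k x ∈ II A := by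
  have : II A ≤ (II A).comap (TF A k) := by
    conv_lhs => rw [II]
    rw [Submodule.span_le]
    rintro _ ⟨w, i, j, u, hij, rfl⟩
    change TF A k (wE w _) ∈ II A
    induction w with
    | nil =>
      have := LinearMap.congr_fun ((TChev A).f_th hA.diag hA.off hA.zero i j k hij) u
      rw [lie_end_apply, sub_eq_iff_eq_add] at this
      change TF A k (thT A i j u) = _ at this
      rw [wE, this, LinearMap.zero_apply, zero_add]
      exact (II_th i j hij _)
    | cons l w ih =>
      have := LinearMap.congr_fun ((TChev A).ef l k) (wE w (thT A i j u))
      rw [lie_end_apply, sub_eq_iff_eq_add, ← sub_eq_iff_eq_add'] at this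
      change _ = TF A k (TE l _) at this
      rw [wE, ← this]
      refine Submodule.sub_mem _ (II_E _ _ ih) ?_
      have hin : wE w (thT A i j u) ∈ II A := Submodule.subset_span ⟨w, i, j, u, hij, rfl⟩
      by_cases h : l = k
      · rw [if_pos h]; exact II_H l _ hin
      · rw [if_neg h]; exact Submodule.zero_mem _
  exact this hx

end T
end FF

namespace FF
open LieAlgebra KacMoody
attribute [local instance 100] LieRing.ofAssociativeRing

section xs
variable {L : Type*} [LieRing L] [LieAlgebra ℂ L]

noncomputable def xv (x y v : L) : ℤ → L
  | Int.ofNat r => Chain.vec (fun n => ad ℂ L (le x y (n + 1))) v r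
  | Int.negSucc r => Chain.vec (fun n => ad ℂ L (lf x y n)) v (r + 1)

noncomputable def xs (x y v : L) (l : List ℕ) (c : ℤ) : L :=
  hl (fun n => ad ℂ L (lh x y n)) l (xv x y v c)

variable {L' : Type*} [LieRing L'] [LieAlgebra ℂ L']

/-- a relation compatible with brackets -/
structure LRel (Q : L → L' → Prop) : Prop where
  lie : ∀ {a a' b b'}, Q a a' → Q b b' → Q ⁅a, b⁆ ⁅a', b'⁆
  smul : ∀ (t : ℂ) {a a'}, Q a a' → Q (t • a) (t • a')

variable {Q : L → L' → Prop} (hQ : LRel Q) {x y v : L} {x' y' v' : L'}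

theorem LRel.pow (hQ : LRel Q) (hx : Q x x') (hy : Q y y') (n : ℕ) :
    Q (((ad ℂ L x) ^ n) y) (((ad ℂ L' x') ^ n) y') := by
  induction n with
  | zero => exact hy
  | succ n ih => rw [pow_succ', pow_succ']; exact hQ.lie hx ih

theorem LRel.le (hQ : LRel Q) (hx : Q x x') (hy : Q y y') (n : ℕ) : Q (le x y n) (le x' y' n) := by
  induction n with
  | zero => exact hx
  | succ n ih => exact hQ.smul _ (hQ.lie (hQ.lie hx hy) ih)

theorem LRel.lf (hQ : LRel Q) (hx : Q x x') (hy : Q y y') (n : ℕ) : Q (lf x y n) (lf x' y' n) := by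
  induction n with
  | zero => exact hy
  | succ n ih => exact hQ.smul _ (hQ.lie (hQ.lie hx hy) ih)

theorem LRel.vec (hQ : LRel Q) (g : ℕ → L) (g' : ℕ → L') (hg : ∀ n, Q (g n) (g' n)) (hv : Q v v') (r : ℕ) :
    Q (Chain.vec (fun n => ad ℂ L (g n)) v r) (Chain.vec (fun n => ad ℂ L' (g' n)) v' r) := by
  induction r with
  | zero => exact hv
  | succ n ih => exact hQ.lie (hg _) ih

theorem LRel.xs (hQ : LRel Q) (hx : Q x x') (hy : Q y y') (hv : Q v v') (l : List ℕ) (c : ℤ) :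
    Q (xs x y v l c) (xs x' y' v' l c) := by
  induction l with
  | nil =>
    rcases c with r | r
    · exact hQ.vec _ _ (fun n => hQ.le hx hy _) hv r
    · exact hQ.vec _ _ (fun n => hQ.lf hx hy _) hv _
  | cons i l ih => exact hQ.lie (hQ.lie hx (hQ.lf hx hy _)) ih

end xs

section K
abbrev KK := Fock × ℂ

noncomputable def rho (a : Module.End ℂ Fock) : Module.End ℂ KK :=
  (LinearMap.inl ℂ Fock ℂ).comp (a.comp (LinearMap.fst ℂ Fock ℂ))
noncomputable def kk (m : Fock) : Module.End ℂ KK :=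
  (LinearMap.inl ℂ Fock ℂ).comp ((LinearMap.toSpanSingleton ℂ Fock m).comp (LinearMap.snd ℂ Fock ℂ))

theorem rho_apply (a : Module.End ℂ Fock) (u : KK) : rho a u = (a u.1, 0) := rfl
theorem kk_apply (m : Fock) (u : KK) : kk m u = (u.2 • m, 0) := rfl

theorem rho_lie (a b : Module.End ℂ Fock) : ⁅rho a, rho b⁆ = rho ⁅a, b⁆ := by
  apply LinearMap.ext; intro u
  rw [lie_end_apply]; simp only [rho_apply, lie_end_apply]; simp
theorem rho_kk (a : Module.End ℂ Fock) (m : Fock) : ⁅rho a, kk m⁆ = kk (a m) := by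
  apply LinearMap.ext; intro u
  rw [lie_end_apply]; simp only [rho_apply, kk_apply]; simp
theorem kk_kk (a : Fock) (m : Fock) : ⁅kk a, kk m⁆ = 0 := by
  apply LinearMap.ext; intro u
  rw [lie_end_apply]; simp only [kk_apply]; simp
theorem kk_zero : kk 0 = 0 := by
  apply LinearMap.ext; intro u; simp [kk_apply]
theorem kk_neg (m : Fock) : kk (-m) = - kk m := by
  apply LinearMap.ext; intro u; simp [kk_apply]
theorem rho_smul (t : ℂ) (a : Module.End ℂ Fock) : rho (t • a) = t • rho a := by
  apply LinearMap.ext; intro u; simp [rho_apply]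
theorem rho_zero : rho 0 = 0 := by
  apply LinearMap.ext; intro u; simp [rho_apply]

theorem L_ef (m n : ℕ) : ⁅Fe m, Ff n⁆ = Fh (m + n) := by
  apply LinearMap.ext; intro u; rw [lie_end_apply, F_ef]; abel
theorem L_ee (m n : ℕ) : ⁅Fe m, Fe n⁆ = 0 := by
  apply LinearMap.ext; intro u; rw [lie_end_apply, F_ee, sub_self]; rfl
theorem L_ff (m n : ℕ) : ⁅Ff m, Ff n⁆ = 0 := by
  apply LinearMap.ext; intro u; rw [lie_end_apply, F_ff, sub_self]; rfl
theorem L_he (m n : ℕ) : ⁅Fh m, Fe n⁆ = (2 : ℂ) • Fe (m + n + 1) := by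
  apply LinearMap.ext; intro u; rw [lie_end_apply, F_he, LinearMap.smul_apply]; abel
theorem L_hf (m n : ℕ) : ⁅Fh m, Ff n⁆ = (-2 : ℂ) • Ff (m + n + 1) := by
  apply LinearMap.ext; intro u; rw [lie_end_apply, F_hf, LinearMap.smul_apply]; module

theorem L_eh : ⁅Fe 0, Fh 0⁆ = (-2 : ℂ) • Fe 1 := by
  apply LinearMap.ext; intro u; rw [lie_end_apply, F_he, LinearMap.smul_apply]; module
theorem L_fh : ⁅Ff 0, Fh 0⁆ = (2 : ℂ) • Ff 1 := by
  apply LinearMap.ext; intro u; rw [lie_end_apply, F_hf, LinearMap.smul_apply]; module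
theorem L_fe : ⁅Ff 0, Fe 0⁆ = (-1 : ℂ) • Fh 0 := by
  apply LinearMap.ext; intro u; rw [lie_end_apply, F_ef, LinearMap.smul_apply]; module
theorem L_smul (t : ℂ) (a b : Module.End ℂ Fock) : ⁅a, t • b⁆ = t • ⁅a, b⁆ := lie_smul t a b
theorem kk_rho (a : Module.End ℂ Fock) (m : Fock) : ⁅kk m, rho a⁆ = kk (- a m) := by
  apply LinearMap.ext; intro u
  rw [lie_end_apply]; simp only [rho_apply, kk_apply]; simp

noncomputable def EK : Fin 3 → Module.End ℂ KK := ![rho (Fe 0), rho (Ff 0), kk vac]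

theorem EK_le (n : ℕ) : le (EK 0) (EK 1) n = rho (Fe n) := by
  induction n with
  | zero => rfl
  | succ n ih =>
    rw [le, ih]
    change (1 / 2 : ℂ) • ⁅⁅rho (Fe 0), rho (Ff 0)⁆, _⁆ = _
    rw [rho_lie, rho_lie, L_ef, L_he, rho_smul, smul_smul]
    norm_num
theorem EK_lf (n : ℕ) : lf (EK 0) (EK 1) n = rho (Ff n) := by
  induction n with
  | zero => rfl
  | succ n ih =>
    rw [lf, ih]
    change (-1 / 2 : ℂ) • ⁅⁅rho (Fe 0), rho (Ff 0)⁆, _⁆ = _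
    rw [rho_lie, rho_lie, L_ef, L_hf, rho_smul, smul_smul]
    norm_num
theorem EK_lh (n : ℕ) : lh (EK 0) (EK 1) n = rho (Fh n) := by
  rw [lh, EK_lf]
  change ⁅rho (Fe 0), _⁆ = _
  rw [rho_lie, L_ef, zero_add]

theorem EK_vec (g : ℕ → Module.End ℂ KK) (g' : ℕ → Module.End ℂ Fock) (hg : ∀ n, g n = rho (g' n)) (v : Fock) (r : ℕ) :
    Chain.vec (fun n => ad ℂ _ (g n)) (kk v) r = kk (Chain.vec g' v r) := by
  induction r with
  | zero => rfl
  | succ r ih =>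
    rw [Chain.vec, ih, hg]
    exact rho_kk _ _

theorem EK_xs (l : List ℕ) (c : ℤ) : xs (EK 0) (EK 1) (EK 2) l c = kk (hl FR.h l (FR.vv vac c)) := by
  induction l with
  | nil =>
    rcases c with r | r
    · exact EK_vec _ _ (fun n => EK_le _) _ _
    · exact EK_vec _ _ (fun n => EK_lf _) _ _
  | cons i l ih =>
    change ⁅lh (EK 0) (EK 1) i, xs (EK 0) (EK 1) (EK 2) l c⁆ = _
    rw [ih, EK_lh]
    exact rho_kk _ _

theorem EK_serre (i j : Fin 3) (hij : i ≠ j) :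
    ((ad ℂ (Module.End ℂ KK) (EK i)) ^ (1 - AF i j).toNat) (EK j) = 0 := by
  have p1 : ∀ a b : Module.End ℂ KK, ((ad ℂ (Module.End ℂ KK) a) ^ 1) b = ⁅a, b⁆ := fun a b => by
    rw [pow_one]; rfl
  have p2 : ∀ a b : Module.End ℂ KK, ((ad ℂ (Module.End ℂ KK) a) ^ 2) b = ⁅a, ⁅a, b⁆⁆ := fun a b => by
    rw [pow_succ', pow_one]; rfl
  have p3 : ∀ a b : Module.End ℂ KK, ((ad ℂ (Module.End ℂ KK) a) ^ 3) b = ⁅a, ⁅a, ⁅a, b⁆⁆⁆ := fun a b => by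
    rw [pow_succ', pow_succ', pow_one]; rfl
  have h1 : Fe 0 vac = 0 := vac_isVac.e0
  have h2 : Ff 0 (Ff 0 vac) = 0 := vac_isVac.f00
  have k1 : ⁅EK 0, EK 2⁆ = 0 := (rho_kk _ _).trans (by rw [h1, kk_zero])
  fin_cases i <;> fin_cases j
  · exact absurd rfl hij
  · refine (p3 _ _).trans ?_
    change ⁅rho (Fe 0), ⁅rho (Fe 0), ⁅rho (Fe 0), rho (Ff 0)⁆⁆⁆ = 0
    rw [rho_lie, rho_lie, rho_lie, L_ef, L_eh, L_smul, L_ee, smul_zero, rho_zero]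
  · exact (p1 _ _).trans k1
  · refine (p3 _ _).trans ?_
    change ⁅rho (Ff 0), ⁅rho (Ff 0), ⁅rho (Ff 0), rho (Fe 0)⁆⁆⁆ = 0
    rw [rho_lie, rho_lie, rho_lie, L_fe, L_smul, L_fh, L_smul, L_smul, L_ff, smul_zero, smul_zero, rho_zero]
  · exact absurd rfl hij
  · refine (p2 _ _).trans ?_
    change ⁅rho (Ff 0), ⁅rho (Ff 0), kk vac⁆⁆ = 0
    rw [rho_kk, rho_kk, h2, kk_zero]
  · refine (p1 _ _).trans ?_
    change ⁅kk vac, rho (Fe 0)⁆ = 0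
    rw [kk_rho, h1, neg_zero, kk_zero]
  · refine (p2 _ _).trans ?_
    change ⁅kk vac, ⁅kk vac, rho (Ff 0)⁆⁆ = 0
    rw [kk_rho, kk_kk]
  · exact absurd rfl hij

noncomputable def Ew : List (Fin 3) → KK
  | [] => (0, 1)
  | i :: w => EK i (Ew w)

noncomputable def kap : TT 3 →ₗ[ℂ] KK := Finsupp.linearCombination ℂ Ew

theorem kap_single (w) : kap (Finsupp.single w 1) = Ew w := by simp [kap]

def kRel (a : Module.End ℂ (TT 3)) (k : Module.End ℂ KK) : Prop := ∀ u, kap (a u) = k (kap u)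

theorem kRel_E (i : Fin 3) : kRel (TE i) (EK i) := by
  intro u
  have : kap.comp (TE i) = (EK i).comp kap := by
    apply TT_ext; intro w
    simp only [LinearMap.comp_apply, TE_single, kap_single]; rfl
  exact LinearMap.congr_fun this u

theorem kRel_L : LRel kRel where
  lie ha hb u := by rw [lie_end_apply, lie_end_apply, map_sub, ha, hb, hb, ha]
  smul t a a' ha u := by rw [LinearMap.smul_apply, LinearMap.smul_apply, map_smul, ha]

theorem II_kap (x : TT 3) (hx : x ∈ II AF) : kap x = 0 := by
  have : II AF ≤ LinearMap.ker kap := by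
    rw [II, Submodule.span_le]
    rintro _ ⟨w, i, j, u, hij, rfl⟩
    change kap _ = 0
    induction w with
    | nil =>
      have := kRel_L.pow (kRel_E i) (kRel_E j) (1 - AF i j).toNat u
      rw [EK_serre i j hij] at this
      exact this
    | cons k w ih =>
      rw [wE, kRel_E, ih, map_zero]
  exact this hx
end K
end FF

namespace FF
open LieAlgebra KacMoody
attribute [local instance 100] LieRing.ofAssociativeRing

section G
variable {ℓ : ℕ} {A : Matrix (Fin ℓ) (Fin ℓ) ℤ}

theorem free_top (S : LieSubalgebra ℂ (FreeLie ℓ)) (hE : ∀ i, E i ∈ S) (hF : ∀ i, F i ∈ S)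
    (hH : ∀ i, H i ∈ S) (x : FreeLie ℓ) : x ∈ S := by
  have hs : ∀ s, FreeLieAlgebra.of ℂ s ∈ S := by
    rintro (i | i | i)
    · exact hE i
    · exact hF i
    · exact hH i
  let g : FreeLie ℓ →ₗ⁅ℂ⁆ S := FreeLieAlgebra.lift ℂ (fun s => ⟨FreeLieAlgebra.of ℂ s, hs s⟩)
  have : S.incl.comp g = LieHom.id := by
    apply FreeLieAlgebra.hom_ext
    intro s
    simp [g]
  have h2 := LieHom.congr_fun this x
  rw [LieHom.id_apply] at h2
  rw [← h2]
  exact (g x).2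

noncomputable def genT (A : Matrix (Fin ℓ) (Fin ℓ) ℤ) : ChevalleyGen ℓ → Module.End ℂ (TT ℓ)
  | .e i => TE i
  | .f i => TF A i
  | .h i => TH A i

noncomputable def Phi (A : Matrix (Fin ℓ) (Fin ℓ) ℤ) : FreeLie ℓ →ₗ⁅ℂ⁆ Module.End ℂ (TT ℓ) :=
  FreeLieAlgebra.lift ℂ (genT A)

theorem Phi_E (i : Fin ℓ) : Phi A (E i) = TE i := FreeLieAlgebra.lift_of_apply _ _
theorem Phi_F (i : Fin ℓ) : Phi A (F i) = TF A i := FreeLieAlgebra.lift_of_apply _ _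
theorem Phi_H (i : Fin ℓ) : Phi A (H i) = TH A i := FreeLieAlgebra.lift_of_apply _ _

theorem Phi_stable (hA : GCM A) (x : FreeLie ℓ) : ∀ u ∈ II A, Phi A x u ∈ II A := by
  let S : LieSubalgebra ℂ (FreeLie ℓ) :=
    { carrier := {x | ∀ u ∈ II A, Phi A x u ∈ II A}
      add_mem' := fun {a b} ha hb u hu => by
        rw [map_add, LinearMap.add_apply]; exact Submodule.add_mem _ (ha u hu) (hb u hu)
      zero_mem' := fun u hu => by rw [map_zero]; exact Submodule.zero_mem _
      smul_mem' := fun t a ha u hu => by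
        rw [map_smul, LinearMap.smul_apply]; exact Submodule.smul_mem _ _ (ha u hu)
      lie_mem' := fun {a b} ha hb u hu => by
        rw [LieHom.map_lie, lie_end_apply]
        exact Submodule.sub_mem _ (ha _ (hb u hu)) (hb _ (ha u hu)) }
  refine free_top S (fun i u hu => ?_) (fun i u hu => ?_) (fun i u hu => ?_) x
  · rw [Phi_E]; exact II_E i u hu
  · rw [Phi_F]; exact II_F hA i u hu
  · rw [Phi_H]; exact II_H i u hu

noncomputable def JJ (hA : GCM A) : LieIdeal ℂ (FreeLie ℓ) :=
  { carrier := {x | ∀ u, Phi A x u ∈ II A}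
    add_mem' := fun {a b} ha hb u => by
        rw [map_add, LinearMap.add_apply]; exact Submodule.add_mem _ (ha u) (hb u)
    zero_mem' := fun u => by rw [map_zero]; exact Submodule.zero_mem _
    smul_mem' := fun t a ha u => by
        rw [map_smul, LinearMap.smul_apply]; exact Submodule.smul_mem _ _ (ha u)
    lie_mem := fun {a b} hb u => by
        rw [LieHom.map_lie, lie_end_apply]
        exact Submodule.sub_mem _ (Phi_stable hA _ _ (hb u)) (hb _) }

theorem hom_LRel {L L' : Type*} [LieRing L] [LieAlgebra ℂ L] [LieRing L'] [LieAlgebra ℂ L'] (f : L →ₗ⁅ℂ⁆ L') :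
    LRel (fun a b => f a = b) where
  lie ha hb := by rw [LieHom.map_lie, ha, hb]
  smul t a a' ha := by rw [map_smul, ha]

theorem serre_le_JJ (hA : GCM A) : serreIdeal A ≤ JJ hA := by
  rw [serreIdeal, LieSubmodule.lieSpan_le]
  have key : ∀ x : FreeLie ℓ, Phi A x = 0 → x ∈ JJ hA := fun x hx u => by
    rw [hx]; exact Submodule.zero_mem _
  rintro x (((((⟨i, j, rfl⟩ | ⟨i, j, rfl⟩) | ⟨i, j, rfl⟩) | ⟨i, j, rfl⟩) | ⟨i, j, hij, rfl⟩) | ⟨i, j, hij, rfl⟩)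
  · apply key
    rw [LieHom.map_lie, Phi_H, Phi_H]; exact (TChev A).hh i j
  · apply key
    rw [map_sub, LieHom.map_lie, Phi_E, Phi_F, sub_eq_zero]
    refine ((TChev A).ef i j).trans ?_
    split_ifs
    · rw [Phi_H]; rfl
    · rw [map_zero]
  · apply key
    rw [map_sub, LieHom.map_lie, map_smul, Phi_E, Phi_H, sub_eq_zero]
    exact (TChev A).he i j
  · apply key
    rw [map_add, LieHom.map_lie, map_smul, Phi_F, Phi_H]
    exact add_eq_zero_iff_eq_neg.2 ((TChev A).hf i j)
  · intro u
    rw [(hom_LRel (Phi A)).pow (Phi_E i) (Phi_E j) (1 - A i j).toNat]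
    exact II_th i j hij u
  · apply key
    rw [(hom_LRel (Phi A)).pow (Phi_F i) (Phi_F j) (1 - A i j).toNat]
    exact T_fSerre hA i j hij

end G

theorem AF_GCM : GCM AF where
  diag := by decide
  off i j := by fin_cases i <;> fin_cases j <;> simp [AF]
  zero i j := by fin_cases i <;> fin_cases j <;> simp [AF]

section A
variable {ℓ : ℕ} (A : Matrix (Fin ℓ) (Fin ℓ) ℤ)

/-- the quotient map -/
noncomputable def qm : FreeLie ℓ →ₗ⁅ℂ⁆ gA A :=
  { (LieSubmodule.Quotient.mk' (serreIdeal A) : FreeLie ℓ →ₗ[ℂ] gA A) with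
    map_lie' := fun {x y} => LieSubmodule.Quotient.mk_bracket _ x y }

theorem qm_surj : Function.Surjective (qm A) := LieSubmodule.Quotient.surjective_mk' _
theorem qm_zero (x : FreeLie ℓ) : qm A x = 0 ↔ x ∈ serreIdeal A := LieSubmodule.Quotient.mk_eq_zero _
theorem qm_H (i : Fin ℓ) : qm A (H i) = Hbar A i := rfl

noncomputable def Eb (i : Fin ℓ) : gA A := qm A (E i)
noncomputable def Fb (i : Fin ℓ) : gA A := qm A (F i)

theorem serre_mem {x : FreeLie ℓ} (h : x ∈ serreRelations A) : qm A x = 0 :=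
  (qm_zero A x).2 (LieSubmodule.subset_lieSpan h)

noncomputable def gChev : Chev A (gA A) where
  e := Eb A
  f := Fb A
  h := Hbar A
  hh i j := by
    rw [← qm_H, ← qm_H, ← LieHom.map_lie]
    exact serre_mem A (.inl (.inl (.inl (.inl (.inl ⟨i, j, rfl⟩)))))
  ef i j := by
    have := serre_mem A (.inl (.inl (.inl (.inl (.inr ⟨i, j, rfl⟩)))))
    rw [map_sub, LieHom.map_lie, sub_eq_zero] at this
    refine this.trans ?_
    split_ifs
    · rfl
    · rw [map_zero]
  he i j := by
    have := serre_mem A (.inl (.inl (.inl (.inr ⟨i, j, rfl⟩))))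
    rw [map_sub, LieHom.map_lie, map_smul, sub_eq_zero] at this
    exact this
  hf i j := by
    have := serre_mem A (.inl (.inl (.inr ⟨i, j, rfl⟩)))
    rw [map_add, LieHom.map_lie, map_smul] at this
    exact add_eq_zero_iff_eq_neg.1 this

theorem gSerre (i j : Fin ℓ) (hij : i ≠ j) : ((ad ℂ (gA A) (Eb A i)) ^ (1 - A i j).toNat) (Eb A j) = 0 := by
  have := serre_mem A (.inl (.inr ⟨i, j, hij, rfl⟩))
  rwa [(hom_LRel (qm A)).pow rfl rfl] at this

theorem gA_top (S : LieSubalgebra ℂ (gA A)) (hE : ∀ i, Eb A i ∈ S) (hF : ∀ i, Fb A i ∈ S)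
    (hH : ∀ i, Hbar A i ∈ S) (x : gA A) : x ∈ S := by
  obtain ⟨x, rfl⟩ := qm_surj A x
  exact free_top (S.comap (qm A)) hE hF hH x
end A

noncomputable def Psi : FreeLie 3 →ₗ[ℂ] KK :=
  kap.comp ((LinearMap.applyₗ (Finsupp.single [] 1)).comp (Phi AF : FreeLie 3 →ₗ[ℂ] Module.End ℂ (TT 3)))

theorem Psi_apply (x : FreeLie 3) : Psi x = kap (Phi AF x (Finsupp.single [] 1)) := rfl

theorem Psi_serre : (serreIdeal AF).toSubmodule ≤ LinearMap.ker Psi := fun x hx =>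
  II_kap _ (serre_le_JJ AF_GCM hx _)

noncomputable def Psib : gA AF →ₗ[ℂ] KK := Submodule.liftQ _ Psi Psi_serre
theorem Psib_qm (x : FreeLie 3) : Psib (qm AF x) = Psi x := rfl

theorem Psib_xs (l : List ℕ) (c : ℤ) :
    Psib (xs (Eb AF 0) (Eb AF 1) (Eb AF 2) l c) = (hl FR.h l (FR.vv vac c), 0) := by
  rw [← (hom_LRel (qm AF)).xs (x := E 0) (y := E 1) (v := E 2) (x' := Eb AF 0) (y' := Eb AF 1) (v' := Eb AF 2) rfl rfl rfl, Psib_qm, Psi_apply,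
    (hom_LRel (Phi AF)).xs (Phi_E 0) (Phi_E 1) (Phi_E 2),
    kRel_L.xs (kRel_E 0) (kRel_E 1) (kRel_E 2), EK_xs, kap_single, kk_apply]
  simp [Ew]

theorem xs_indep (c : ℤ) : LinearIndependent ℂ
    (fun s : Multiset ℕ => xs (Eb AF 0) (Eb AF 1) (Eb AF 2) s.toList c) := by
  apply LinearIndependent.of_comp ((LinearMap.fst ℂ Fock ℂ).comp Psib)
  convert hl_indep c using 1
  funext s
  simp only [Function.comp_apply, LinearMap.comp_apply, Psib_xs]
  rfl

end FF

namespace FF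
open LieAlgebra KacMoody
attribute [local instance 100] LieRing.ofAssociativeRing

section W
variable {ℓ : ℕ} {A : Matrix (Fin ℓ) (Fin ℓ) ℤ} {L : Type*} [LieRing L] [LieAlgebra ℂ L]

/-- nested words -/
noncomputable def Chev.nw (c : Chev A L) (i : Fin ℓ) : List (Fin ℓ) → L
  | [] => c.e i
  | j :: l => ⁅c.e j, c.nw i l⁆

noncomputable def Chev.Np (c : Chev A L) : Submodule ℂ L :=
  Submodule.span ℂ {x | ∃ i l, x = c.nw i l}

noncomputable def Chev.Hs (c : Chev A L) : Submodule ℂ L := Submodule.span ℂ (Set.range c.h)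

theorem span_map_mem {S : Set L} {P : Submodule ℂ L} (a : L) (h : ∀ x ∈ S, ⁅a, x⁆ ∈ P) (x : L)
    (hx : x ∈ Submodule.span ℂ S) : ⁅a, x⁆ ∈ P := by
  have : Submodule.span ℂ S ≤ P.comap (ad ℂ L a) := Submodule.span_le.2 h
  exact this hx

namespace Chev
variable (c : Chev A L)

theorem e_mem (i : Fin ℓ) : c.e i ∈ c.Np := Submodule.subset_span ⟨i, [], rfl⟩

theorem Np_e (k : Fin ℓ) (x : L) (hx : x ∈ c.Np) : ⁅c.e k, x⁆ ∈ c.Np :=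
  span_map_mem _ (by rintro _ ⟨i, l, rfl⟩; exact Submodule.subset_span ⟨i, k :: l, rfl⟩) x hx

theorem h_nw (k i : Fin ℓ) (l : List (Fin ℓ)) : ∃ t : ℂ, ⁅c.h k, c.nw i l⁆ = t • c.nw i l := by
  induction l with
  | nil => exact ⟨_, c.he k i⟩
  | cons j l ih =>
    obtain ⟨t, ht⟩ := ih
    refine ⟨(A k j : ℂ) + t, ?_⟩
    rw [nw, leibniz_lie, c.he, ht, smul_lie, lie_smul, add_smul]

theorem Np_h (k : Fin ℓ) (x : L) (hx : x ∈ c.Np) : ⁅c.h k, x⁆ ∈ c.Np :=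
  span_map_mem _ (by
    rintro _ ⟨i, l, rfl⟩
    obtain ⟨t, ht⟩ := c.h_nw k i l
    rw [ht]
    exact Submodule.smul_mem _ _ (Submodule.subset_span ⟨i, l, rfl⟩)) x hx

theorem Hs_h (k : Fin ℓ) (x : L) (hx : x ∈ c.Hs) : ⁅c.h k, x⁆ ∈ c.Hs :=
  span_map_mem _ (by rintro _ ⟨i, rfl⟩; rw [c.hh]; exact Submodule.zero_mem _) x hx

theorem Hs_e (k : Fin ℓ) (x : L) (hx : x ∈ c.Hs) : ⁅c.e k, x⁆ ∈ c.Np :=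
  span_map_mem _ (by
    rintro _ ⟨i, rfl⟩; rw [← lie_skew, c.he]
    exact Submodule.neg_mem _ (Submodule.smul_mem _ _ (c.e_mem _))) x hx

theorem Np_f (k : Fin ℓ) (x : L) (hx : x ∈ c.Np) : ⁅c.f k, x⁆ ∈ c.Np ⊔ c.Hs :=
  span_map_mem _ (by
    have fe : ∀ i j, ⁅c.f i, c.e j⁆ = if i = j then - c.h i else 0 := c.swap.ef
    rintro _ ⟨i, l, rfl⟩
    induction l with
    | nil =>
      rw [nw, fe]
      split_ifs
      · exact Submodule.neg_mem _ (Submodule.mem_sup_right (Submodule.subset_span ⟨_, rfl⟩))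
      · exact Submodule.zero_mem _
    | cons j l ih =>
      rw [nw, leibniz_lie, fe]
      refine Submodule.add_mem _ ?_ (Submodule.mem_sup_left ?_)
      · split_ifs
        · rw [neg_lie]
          exact Submodule.neg_mem _ (Submodule.mem_sup_left (c.Np_h _ _ (Submodule.subset_span ⟨i, l, rfl⟩)))
        · rw [zero_lie]; exact Submodule.zero_mem _
      · obtain ⟨a, ha, b, hb, hab⟩ := Submodule.mem_sup.1 ih
        rw [← hab, lie_add]
        exact Submodule.add_mem _ (c.Np_e _ _ ha) (c.Hs_e _ _ hb)) x hx

theorem swap_Hs : c.swap.Hs = c.Hs := by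
  apply le_antisymm
  · refine Submodule.span_le.2 ?_
    rintro _ ⟨i, rfl⟩
    exact Submodule.neg_mem _ (Submodule.subset_span ⟨i, rfl⟩)
  · refine Submodule.span_le.2 ?_
    rintro _ ⟨i, rfl⟩
    have : -(c.swap.h i) ∈ c.swap.Hs := Submodule.neg_mem _ (Submodule.subset_span ⟨i, rfl⟩)
    simpa [swap] using this

noncomputable def PP : Submodule ℂ L := c.Np ⊔ c.Hs ⊔ c.swap.Np

theorem PP_swap : c.swap.PP = c.PP := by
  have h1 : ∀ i l, c.swap.swap.nw i l = c.nw i l := by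
    intro i l
    induction l with
    | nil => rfl
    | cons j l ih => rw [nw, nw, ih]; rfl
  have h2 : c.swap.swap.Np = c.Np := by simp only [Np, h1]
  rw [PP, PP, h2, swap_Hs, sup_comm, sup_comm c.swap.Np, sup_assoc]

theorem PP_e (k : Fin ℓ) (x : L) (hx : x ∈ c.PP) : ⁅c.e k, x⁆ ∈ c.PP := by
  obtain ⟨a, ha, b, hb, rfl⟩ := Submodule.mem_sup.1 hx
  obtain ⟨a, ha', d, hd, rfl⟩ := Submodule.mem_sup.1 ha
  rw [lie_add, lie_add]
  have h1 := c.Np_e k _ ha'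
  have h2 := c.Hs_e k _ hd
  have h3 := c.swap.Np_f k _ hb
  rw [swap_Hs] at h3
  refine Submodule.add_mem _ (Submodule.mem_sup_left (Submodule.mem_sup_left (Submodule.add_mem _ h1 h2))) ?_
  have : c.swap.Np ⊔ c.Hs ≤ c.PP := sup_le le_sup_right (le_sup_right.trans le_sup_left)
  exact this h3

theorem PP_h (k : Fin ℓ) (x : L) (hx : x ∈ c.PP) : ⁅c.h k, x⁆ ∈ c.PP := by
  obtain ⟨a, ha, b, hb, rfl⟩ := Submodule.mem_sup.1 hx
  obtain ⟨a, ha', d, hd, rfl⟩ := Submodule.mem_sup.1 ha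
  rw [lie_add, lie_add]
  have h1 := c.Np_h k _ ha'
  have h2 := c.Hs_h k _ hd
  have h3 := Submodule.neg_mem _ (c.swap.Np_h k _ hb)
  rw [← neg_lie, show -c.swap.h k = c.h k from neg_neg _] at h3
  exact Submodule.add_mem _ (Submodule.add_mem _ (Submodule.mem_sup_left (Submodule.mem_sup_left h1))
    (Submodule.mem_sup_left (Submodule.mem_sup_right h2))) (Submodule.mem_sup_right h3)

theorem PP_f (k : Fin ℓ) (x : L) (hx : x ∈ c.PP) : ⁅c.f k, x⁆ ∈ c.PP := by
  rw [← PP_swap] at hx ⊢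
  exact c.swap.PP_e k x hx

theorem e_PP (k : Fin ℓ) : c.e k ∈ c.PP := Submodule.mem_sup_left (Submodule.mem_sup_left (c.e_mem k))
theorem h_PP (k : Fin ℓ) : c.h k ∈ c.PP :=
  Submodule.mem_sup_left (Submodule.mem_sup_right (Submodule.subset_span ⟨k, rfl⟩))
theorem f_PP (k : Fin ℓ) : c.f k ∈ c.PP := by
  rw [← PP_swap]; exact c.swap.e_PP k
end Chev

theorem gPP_top (A : Matrix (Fin ℓ) (Fin ℓ) ℤ) (x : gA A) : x ∈ (gChev A).PP := by
  let S : LieSubalgebra ℂ (gA A) :=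
    { carrier := {x | ∀ u ∈ (gChev A).PP, ⁅x, u⁆ ∈ (gChev A).PP}
      add_mem' := fun {a b} ha hb u hu => by
        rw [add_lie]; exact Submodule.add_mem _ (ha u hu) (hb u hu)
      zero_mem' := fun u hu => by rw [zero_lie]; exact Submodule.zero_mem _
      smul_mem' := fun t a ha u hu => by
        rw [smul_lie]; exact Submodule.smul_mem _ _ (ha u hu)
      lie_mem' := fun {a b} ha hb u hu => by
        rw [lie_lie]
        exact Submodule.sub_mem _ (ha _ (hb u hu)) (hb _ (ha u hu)) }
  have hS : ∀ x, x ∈ S := gA_top A S (gChev A).PP_e (gChev A).PP_f (gChev A).PP_h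
  let S' : LieSubalgebra ℂ (gA A) :=
    { (gChev A).PP with lie_mem' := fun {a b} _ hb => hS a b hb }
  exact gA_top A S' (gChev A).e_PP (gChev A).f_PP (gChev A).h_PP x

end W

section R
variable {ℓ : ℕ} {A : Matrix (Fin ℓ) (Fin ℓ) ℤ}

theorem mem_rs {c : Fin ℓ → ℤ} {x : gA A} :
    x ∈ KacMoody.rootSpace A c ↔ ∀ i, ⁅Hbar A i, x⁆ = ((∑ j, A i j * c j : ℤ) : ℂ) • x := by
  rw [KacMoody.rootSpace, Submodule.mem_iInf]
  simp only [Module.End.mem_eigenspace_iff]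
  rfl

theorem rs_lie {c d : Fin ℓ → ℤ} {x y : gA A} (hx : x ∈ KacMoody.rootSpace A c) (hy : y ∈ KacMoody.rootSpace A d) :
    ⁅x, y⁆ ∈ KacMoody.rootSpace A (c + d) := by
  rw [mem_rs] at hx hy ⊢
  intro i
  rw [leibniz_lie, hx, hy, smul_lie, lie_smul, ← add_smul]
  congr 1
  simp only [Pi.add_apply, mul_add, Finset.sum_add_distrib]
  push_cast; ring

theorem g_hh (i j : Fin ℓ) : ⁅Hbar A i, Hbar A j⁆ = 0 := (gChev A).hh i j
theorem g_he (i j : Fin ℓ) : ⁅Hbar A i, Eb A j⁆ = (A i j : ℂ) • Eb A j := (gChev A).he i j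
theorem g_hf (i j : Fin ℓ) : ⁅Hbar A i, Fb A j⁆ = -((A i j : ℂ) • Fb A j) := (gChev A).hf i j

theorem rs_e (j : Fin ℓ) : Eb A j ∈ KacMoody.rootSpace A (Pi.single j 1) := by
  rw [mem_rs]; intro i
  rw [g_he]
  simp [Pi.single_apply]

theorem rs_f (j : Fin ℓ) : Fb A j ∈ KacMoody.rootSpace A (-Pi.single j 1) := by
  rw [mem_rs]; intro i
  rw [g_hf]
  simp [Pi.single_apply]

theorem rs_h (j : Fin ℓ) : Hbar A j ∈ KacMoody.rootSpace A 0 := by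
  rw [mem_rs]; intro i
  rw [g_hh]; simp

theorem rs_indep (hA : Function.Injective (fun c : Fin ℓ → ℤ => fun i => ((∑ j, A i j * c j : ℤ) : ℂ))) :
    iSupIndep (KacMoody.rootSpace A) := by
  have h1 := Module.End.independent_iInf_maxGenEigenspace_of_forall_mapsTo
    (fun i => ad ℂ (gA A) (Hbar A i)) (fun i j φ => by
      apply Module.End.mapsTo_maxGenEigenspace_of_comm
      apply LinearMap.ext; intro u
      change ⁅Hbar A j, ⁅Hbar A i, u⁆⁆ = ⁅Hbar A i, ⁅Hbar A j, u⁆⁆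
      rw [leibniz_lie, g_hh, zero_lie, zero_add])
  refine (h1.comp hA).mono fun c => ?_
  exact iInf_mono fun i => Module.End.eigenspace_le_maxGenEigenspace

theorem indep_eq {ι M : Type*} [AddCommGroup M] [Module ℂ M] {V W : ι → Submodule ℂ M}
    (hV : iSupIndep V) (hW : ∀ i, W i ≤ V i) (ht : ⨆ i, W i = ⊤) (i : ι) : V i ≤ W i := by
  intro x hx
  have hx' : x ∈ W i ⊔ ⨆ j, ⨆ (_ : j ≠ i), W j := by
    have : (⊤ : Submodule ℂ M) ≤ W i ⊔ ⨆ j, ⨆ (_ : j ≠ i), W j := by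
      rw [← ht]
      refine iSup_le fun j => ?_
      by_cases h : j = i
      · subst h; exact le_sup_left
      · exact (le_iSup₂_of_le (f := fun j (_ : j ≠ i) => W j) j h le_rfl).trans le_sup_right
    exact this trivial
  obtain ⟨a, ha, b, hb, rfl⟩ := Submodule.mem_sup.1 hx'
  have hb2 : b ∈ V i := by
    have := Submodule.sub_mem _ hx (hW i ha)
    simpa using this
  have hb3 : b ∈ ⨆ j, ⨆ (_ : j ≠ i), V j := (iSup₂_mono fun j _ => hW j) hb
  have : b = 0 := by
    have := (hV i).le_bot ⟨hb2, hb3⟩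
    simpa using this
  rw [this, add_zero]; exact ha
end R
end FF

namespace FF
open LieAlgebra KacMoody
attribute [local instance 100] LieRing.ofAssociativeRing

noncomputable abbrev gx : gA AF := Eb AF 0
noncomputable abbrev gy : gA AF := Eb AF 1
noncomputable abbrev gv : gA AF := Eb AF 2

theorem s01 : ⁅gx, ⁅gx, ⁅gx, gy⁆⁆⁆ = 0 := by
  have h := gSerre AF 0 1 (by decide)
  rw [show (1 - AF 0 1).toNat = 3 from rfl, pow_succ', pow_succ', pow_one] at h
  exact h
theorem s10 : ⁅gy, ⁅gy, ⁅gy, gx⁆⁆⁆ = 0 := by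
  have h := gSerre AF 1 0 (by decide)
  rw [show (1 - AF 1 0).toNat = 3 from rfl, pow_succ', pow_succ', pow_one] at h
  exact h
theorem s02 : ⁅gx, gv⁆ = 0 := by
  have h := gSerre AF 0 2 (by decide)
  rw [show (1 - AF 0 2).toNat = 1 from rfl, pow_one] at h
  exact h
theorem s12 : ⁅gy, ⁅gy, gv⁆⁆ = 0 := by
  have h := gSerre AF 1 2 (by decide)
  rw [show (1 - AF 1 2).toNat = 2 from rfl, pow_succ', pow_one] at h
  exact h

noncomputable def GR : LoopRep (gA AF) where
  e n := ad ℂ (gA AF) (le gx gy n)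
  f n := ad ℂ (gA AF) (lf gx gy n)
  h n := ad ℂ (gA AF) (lh gx gy n)
  ee m n u := by
    simp only [ad_apply]
    rw [leibniz_lie, (loop_aux gx gy s01 s10).1, zero_lie, zero_add]
  ff m n u := by
    simp only [ad_apply]
    rw [leibniz_lie, (loop_aux gx gy s01 s10).2, zero_lie, zero_add]
  hh m n u := by
    simp only [ad_apply]
    rw [leibniz_lie, loop_hh gx gy s01 s10, zero_lie, zero_add]
  ef m n u := by
    simp only [ad_apply]
    rw [leibniz_lie, loop_ef gx gy s01 s10, add_comm]
  he m n u := by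
    simp only [ad_apply]
    rw [leibniz_lie, loop_he gx gy s01 s10, add_comm, smul_lie]
  hf m n u := by
    simp only [ad_apply]
    rw [leibniz_lie, loop_hf gx gy s01 s10, add_comm, smul_lie, neg_smul, sub_eq_add_neg]

theorem GR_vac : GR.IsVac gv where
  e0 := s02
  f00 := s12

theorem GR_vv (c : ℤ) : GR.vv gv c = xv gx gy gv c := by rcases c with r | r <;> rfl
theorem GR_hl (l : List ℕ) (c : ℤ) : hl GR.h l (GR.vv gv c) = xs gx gy gv l c := by
  rw [GR_vv]; rfl

theorem hl_perm {N : Type*} [AddCommGroup N] [Module ℂ N] (R : LoopRep N) {l l' : List ℕ} (h : l.Perm l') (u : N) :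
    hl R.h l u = hl R.h l' u := by
  induction h with
  | nil => rfl
  | cons a _ ih => rw [hl, hl, ih]
  | swap a b l => simp only [hl]; rw [R.hh]
  | trans _ _ h1 h2 => rw [h1, h2]

theorem xs_perm {l l' : List ℕ} (h : l.Perm l') (c : ℤ) : xs gx gy gv l c = xs gx gy gv l' c := by
  rw [← GR_hl, ← GR_hl, hl_perm GR h]

/-- weights -/
def sz (l : List ℕ) : ℤ := (l.map (fun i : ℕ => (i : ℤ) + 1)).sum
def xw (l : List ℕ) (c : ℤ) : Fin 3 → ℤ := ![c ^ 2 + c + sz l, c ^ 2 + sz l, 1]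

theorem rs_cast {c d : Fin 3 → ℤ} {x : gA AF} (hx : x ∈ KacMoody.rootSpace AF c) (h : c = d) :
    x ∈ KacMoody.rootSpace AF d := h ▸ hx

theorem rs_x : gx ∈ KacMoody.rootSpace AF ![1, 0, 0] :=
  rs_cast (rs_e 0) (by funext i; fin_cases i <;> rfl)
theorem rs_y : gy ∈ KacMoody.rootSpace AF ![0, 1, 0] :=
  rs_cast (rs_e 1) (by funext i; fin_cases i <;> rfl)
theorem rs_v : gv ∈ KacMoody.rootSpace AF ![0, 0, 1] :=
  rs_cast (rs_e 2) (by funext i; fin_cases i <;> rfl)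

theorem vec3 {a b c a' b' c' : ℤ} (h1 : a = a') (h2 : b = b') (h3 : c = c') : ![a, b, c] = ![a', b', c'] := by
  rw [h1, h2, h3]

theorem rs_lie3 {a b c a' b' c' a'' b'' c'' : ℤ} {x y : gA AF} (hx : x ∈ KacMoody.rootSpace AF ![a, b, c])
    (hy : y ∈ KacMoody.rootSpace AF ![a', b', c']) (h1 : a + a' = a'') (h2 : b + b' = b'') (h3 : c + c' = c'') :
    ⁅x, y⁆ ∈ KacMoody.rootSpace AF ![a'', b'', c''] :=
  rs_cast (rs_lie hx hy) (by subst h1 h2 h3; funext i; fin_cases i <;> rfl)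

theorem rs_le (n : ℕ) : le gx gy n ∈ KacMoody.rootSpace AF ![n + 1, n, 0] := by
  induction n with
  | zero => exact rs_x
  | succ n ih =>
    exact Submodule.smul_mem _ _ (rs_lie3 (rs_lie3 rs_x rs_y rfl rfl rfl) ih (by push_cast; ring)
      (by push_cast; ring) rfl)
theorem rs_lf (n : ℕ) : lf gx gy n ∈ KacMoody.rootSpace AF ![n, n + 1, 0] := by
  induction n with
  | zero => exact rs_y
  | succ n ih =>
    exact Submodule.smul_mem _ _ (rs_lie3 (rs_lie3 rs_x rs_y rfl rfl rfl) ih (by push_cast; ring)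
      (by push_cast; ring) rfl)
theorem rs_lh (n : ℕ) : lh gx gy n ∈ KacMoody.rootSpace AF ![n + 1, n + 1, 0] :=
  rs_lie3 rs_x (rs_lf n) (by ring) (by ring) rfl

theorem rs_xv (c : ℤ) : xv gx gy gv c ∈ KacMoody.rootSpace AF ![c ^ 2 + c, c ^ 2, 1] := by
  rcases c with r | r
  · change Chain.vec (fun n => ad ℂ (gA AF) (le gx gy (n + 1))) gv r ∈ KacMoody.rootSpace AF ![(r : ℤ) ^ 2 + r, (r : ℤ) ^ 2, 1]
    induction r with
    | zero => exact rs_v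
    | succ r ih => exact rs_lie3 (rs_le _) ih (by push_cast; ring) (by push_cast; ring) rfl
  · have : ∀ r : ℕ, Chain.vec (fun n => ad ℂ (gA AF) (lf gx gy n)) gv r ∈
        KacMoody.rootSpace AF ![(r : ℤ) ^ 2 - r, (r : ℤ) ^ 2, 1] := by
      intro r
      induction r with
      | zero => exact rs_v
      | succ r ih => exact rs_lie3 (rs_lf _) ih (by push_cast; ring) (by push_cast; ring) rfl
    refine rs_cast (this (r + 1)) (vec3 ?_ ?_ rfl)
    · rw [Int.negSucc_eq]; push_cast; ring
    · rw [Int.negSucc_eq]; push_cast; ring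

theorem rs_xs (l : List ℕ) (c : ℤ) : xs gx gy gv l c ∈ KacMoody.rootSpace AF (xw l c) := by
  induction l with
  | nil => exact rs_cast (rs_xv c) (vec3 (by simp [sz]) (by simp [sz]) rfl)
  | cons i l ih =>
    have h : sz (i :: l) = i + 1 + sz l := by simp [sz]
    exact rs_lie3 (rs_lh i) ih (by rw [h]; ring) (by rw [h]; ring) rfl

theorem AF_inj : Function.Injective (fun c : Fin 3 → ℤ => fun i => ((∑ j, AF i j * c j : ℤ) : ℂ)) := by
  intro c d h
  have h0 := congrFun h 0
  have h1 := congrFun h 1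
  have h2 := congrFun h 2
  simp only [Int.cast_inj, Fin.sum_univ_three, AF, Matrix.of_apply, Matrix.cons_val] at h0 h1 h2
  funext i
  fin_cases i
  · change c 0 = d 0; omega
  · change c 1 = d 1; omega
  · change c 2 = d 2; omega

open Classical in
noncomputable def WW (c : Fin 3 → ℤ) : Submodule ℂ (gA AF) :=
  if c 2 = 1 then Submodule.span ℂ {x | ∃ l k, xw l k = c ∧ x = xs gx gy gv l k} else KacMoody.rootSpace AF c

theorem WW_le (c : Fin 3 → ℤ) : WW c ≤ KacMoody.rootSpace AF c := by
  rw [WW]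
  split_ifs
  · refine Submodule.span_le.2 ?_
    rintro _ ⟨l, k, rfl, rfl⟩
    exact rs_xs l k
  · exact le_rfl

theorem WW_of_ne {c : Fin 3 → ℤ} (h : c 2 ≠ 1) {x : gA AF} (hx : x ∈ KacMoody.rootSpace AF c) : x ∈ ⨆ c, WW c := by
  refine Submodule.mem_iSup_of_mem c ?_
  rw [WW, if_neg h]; exact hx

theorem Sp_WW : GR.Sp gv ≤ ⨆ c, WW c := by
  refine iSup_le fun c => ?_
  refine Submodule.span_le.2 ?_
  rintro _ ⟨l, rfl⟩
  refine Submodule.mem_iSup_of_mem (xw l c) ?_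
  rw [WW, if_pos (show xw l c 2 = 1 from rfl)]
  exact Submodule.subset_span ⟨l, c, rfl, GR_hl l c⟩

theorem nw_mem (i : Fin 3) (l : List (Fin 3)) : ∃ c : Fin 3 → ℤ, 0 ≤ c 2 ∧
    (gChev AF).nw i l ∈ KacMoody.rootSpace AF c ∧
    (c 2 = 0 → ∀ u ∈ GR.Sp gv, ⁅(gChev AF).nw i l, u⁆ ∈ GR.Sp gv) ∧
    (c 2 = 1 → (gChev AF).nw i l ∈ GR.Sp gv) := by
  have st : ∀ j : Fin 3, j ≠ 2 → ∀ u ∈ GR.Sp gv, ⁅Eb AF j, u⁆ ∈ GR.Sp gv := by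
    intro j hj u hu
    fin_cases j
    · exact GR.Sp_e GR_vac 0 u hu
    · exact GR.Sp_f GR_vac 0 u hu
    · exact absurd rfl hj
  have s0 : ∀ j : Fin 3, j ≠ 2 → (Pi.single j 1 : Fin 3 → ℤ) 2 = 0 := by decide
  induction l with
  | nil =>
    refine ⟨Pi.single i 1, ?_, rs_e i, ?_, ?_⟩
    · revert i; decide
    · intro h
      exact st i (by rintro rfl; revert h; decide)
    · intro h
      by_cases hi : i = 2
      · subst hi; exact GR.Sp_v gv
      · rw [s0 i hi] at h; omega
  | cons j l ih =>
    obtain ⟨c, h0, hr, h1, h2⟩ := ih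
    refine ⟨Pi.single j 1 + c, ?_, rs_lie (rs_e j) hr, ?_, ?_⟩
    · have : 0 ≤ (Pi.single j 1 : Fin 3 → ℤ) 2 := by revert j; decide
      rw [Pi.add_apply]; omega
    · intro h u hu
      rw [Pi.add_apply] at h
      have hj : j ≠ 2 := by
        rintro rfl
        rw [Pi.single_eq_same] at h; omega
      rw [s0 j hj, zero_add] at h
      change ⁅⁅Eb AF j, (gChev AF).nw i l⁆, u⁆ ∈ _
      rw [lie_lie]
      exact Submodule.sub_mem _ (st j hj _ (h1 h u hu)) (h1 h _ (st j hj u hu))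
    · intro h
      rw [Pi.add_apply] at h
      change ⁅Eb AF j, (gChev AF).nw i l⁆ ∈ _
      by_cases hj : j = 2
      · subst hj
        rw [Pi.single_eq_same] at h
        rw [← lie_skew]
        exact Submodule.neg_mem _ (h1 (by omega) _ (GR.Sp_v gv))
      · rw [s0 j hj, zero_add] at h
        exact st j hj _ (h2 h)

theorem nwf_mem (i : Fin 3) (l : List (Fin 3)) : ∃ c : Fin 3 → ℤ, c 2 ≤ 0 ∧
    (gChev AF).swap.nw i l ∈ KacMoody.rootSpace AF c := by
  have s0 : ∀ j : Fin 3, (-Pi.single j 1 : Fin 3 → ℤ) 2 ≤ 0 := by decide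
  induction l with
  | nil => exact ⟨_, s0 i, rs_f i⟩
  | cons j l ih =>
    obtain ⟨c, h0, hr⟩ := ih
    refine ⟨_, ?_, rs_lie (rs_f j) hr⟩
    have := s0 j
    rw [Pi.add_apply]; omega

theorem WW_top : ⨆ c, WW c = ⊤ := by
  rw [eq_top_iff]
  intro x _
  have : (gChev AF).PP ≤ ⨆ c, WW c := by
    refine sup_le (sup_le ?_ ?_) ?_
    · refine Submodule.span_le.2 ?_
      rintro _ ⟨i, l, rfl⟩
      obtain ⟨c, h0, hr, h1, h2⟩ := nw_mem i l
      by_cases h : c 2 = 1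
      · exact Sp_WW (h2 h)
      · exact WW_of_ne h hr
    · refine Submodule.span_le.2 ?_
      rintro _ ⟨i, rfl⟩
      exact WW_of_ne (c := 0) (by simp) (rs_h i)
    · refine Submodule.span_le.2 ?_
      rintro _ ⟨i, l, rfl⟩
      obtain ⟨c, h0, hr⟩ := nwf_mem i l
      exact WW_of_ne (by omega) hr
  exact this (gPP_top AF x)

theorem rs_eq (c : Fin 3 → ℤ) : KacMoody.rootSpace AF c = WW c :=
  le_antisymm (indep_eq (rs_indep AF_inj) WW_le WW_top c) (WW_le c)

noncomputable def pf (c : ℤ) (m : ℕ) (q : Nat.Partition m) : gA AF :=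
  xs gx gy gv (q.parts.map Nat.pred).toList c

theorem pf_indep (c : ℤ) (m : ℕ) : LinearIndependent ℂ (pf c m) := by
  refine (xs_indep c).comp (fun q : Nat.Partition m => q.parts.map Nat.pred) ?_
  intro q r h
  have key : ∀ q : Nat.Partition m, (q.parts.map Nat.pred).map Nat.succ = q.parts := by
    intro q
    rw [Multiset.map_map]
    conv_rhs => rw [← Multiset.map_id q.parts]
    apply Multiset.map_congr rfl
    intro a ha
    exact Nat.succ_pred_eq_of_pos (q.parts_pos ha)
  apply Nat.Partition.ext
  rw [← key q, ← key r]
  exact congrArg (Multiset.map Nat.succ) h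

theorem sz_eq (l : List ℕ) : sz l = (((l : Multiset ℕ).map Nat.succ).sum : ℕ) := by
  induction l with
  | nil => rfl
  | cons i l ih =>
    have h : sz (i :: l) = i + 1 + sz l := by simp [sz]
    rw [h, ih, ← Multiset.cons_coe, Multiset.map_cons, Multiset.sum_cons]
    push_cast; rfl

theorem mult_eq (a b m : ℕ) (h : (m : ℤ) = b - ((a : ℤ) - b) ^ 2) :
    KacMoody.mult AF ![(a : ℤ), (b : ℤ), 1] = p m := by
  have : KacMoody.rootSpace AF ![(a : ℤ), (b : ℤ), 1] = Submodule.span ℂ (Set.range (pf (a - b) m)) := by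
    apply le_antisymm
    · rw [rs_eq, WW, if_pos (show (![(a : ℤ), (b : ℤ), 1] : Fin 3 → ℤ) 2 = 1 from rfl)]
      refine Submodule.span_le.2 ?_
      rintro _ ⟨l, k, hw, rfl⟩
      have e0 : k ^ 2 + k + sz l = a := congrFun hw 0
      have e1 : k ^ 2 + sz l = b := congrFun hw 1
      have hk : k = a - b := by linarith
      subst hk
      have hs : sz l = m := by linarith
      rw [sz_eq] at hs
      let q : Nat.Partition m :=
        { parts := (l : Multiset ℕ).map Nat.succ
          parts_pos := by
            intro i hi
            obtain ⟨j, _, rfl⟩ := Multiset.mem_map.1 hi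
            exact Nat.succ_pos j
          parts_sum := by exact_mod_cast hs }
      refine Submodule.subset_span ⟨q, ?_⟩
      apply xs_perm
      rw [← Multiset.coe_eq_coe, Multiset.coe_toList]
      change ((l : Multiset ℕ).map Nat.succ).map Nat.pred = _
      rw [Multiset.map_map]
      exact Multiset.map_id _
    · refine Submodule.span_le.2 ?_
      rintro _ ⟨q, rfl⟩
      refine rs_cast (rs_xs _ _) ?_
      have hs : sz (q.parts.map Nat.pred).toList = m := by
        rw [sz_eq, Multiset.coe_toList, Multiset.map_map]
        conv_rhs => rw [← q.parts_sum, ← Multiset.map_id q.parts]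
        congr 2
        apply Multiset.map_congr rfl
        intro a ha
        exact Nat.succ_pred_eq_of_pos (q.parts_pos ha)
      rw [xw, hs, h]
      exact vec3 (by ring) (by ring) rfl
  rw [KacMoody.mult, this, finrank_span_eq_card (pf_indep _ _), p]

theorem normAF_eq (a b : ℤ) : normAF ![a, b, 1] = 2 * ((a - b) ^ 2 - b + 1) := by
  simp [normAF, Fin.sum_univ_three, AF]
  ring

end FF

theorem feingold_frenkel_level_one (a b : ℕ)
    (hnorm : normAF ![(a : ℤ), (b : ℤ), 1] ≤ 0) :
    KacMoody.mult AF ![(a : ℤ), (b : ℤ), 1] =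
      p ((1 - normAF ![(a : ℤ), (b : ℤ), 1] / 2).toNat) := by
  apply FF.mult_eq
  rw [FF.normAF_eq] at hnorm ⊢
  rw [Int.mul_ediv_cancel_left _ (by norm_num), Int.toNat_of_nonneg (by linarith)]
  ring
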